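/- arXiv:2303.09090 — 2 statements merged into one kernel-verified Lean document; each statement's English description precedes it below -/
import Mathlib

section
/- Let 𝒫 = (P, μ, σ) be an n-dimensional system and suppose u_i ∈ ℳ^{exp,1}(P) converges to u_∞ ∈ ℳ^{exp,1}(P) in L¹(P, μ). Then U_𝒫(u_∞) ≤ liminf_{i→∞} U_𝒫(u_i). If moreover there exist p > 1 and C > 0 with ∫_P u_i^p dμ ≤ C for all i and ∫_P u_∞^p dμ ≤ C, then S_𝒫(u_i) → S_𝒫(u_∞). -/
open MeasureTheory Filter Topology
open scoped ENNReal NNReal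

noncomputable section

abbrev Euc (n : ℕ) := EuclideanSpace ℝ (Fin n)

/-- A `[0,∞]`-valued function on a set `K ⊆ ℝⁿ` is convex if
`u((1−t)x+ty) ≤ (1−t)u(x)+t·u(y)` in `[0,∞]` for all `x, y ∈ K` and `t ∈ [0,1]`. -/
def ConvexFnOn {n : ℕ} (K : Set (Euc n)) (u : Euc n → ℝ≥0∞) : Prop :=
  ∀ ⦃x⦄, x ∈ K → ∀ ⦃y⦄, y ∈ K → ∀ ⦃t : ℝ⦄, 0 ≤ t → t ≤ 1 →
    u ((1 - t) • x + t • y) ≤ ENNReal.ofReal (1 - t) * u x + ENNReal.ofReal t * u y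

/-- A polytope: a compact set with nonempty interior which is a finite
intersection of closed half-spaces (cut out by nonzero affine functions). -/
def IsPolytope {n : ℕ} (P : Set (Euc n)) : Prop :=
  IsCompact P ∧ (interior P).Nonempty ∧
    ∃ (m : ℕ) (L : Fin m → (Euc n →ᵃ[ℝ] ℝ)),
      (∀ k, L k ≠ 0) ∧ P = ⋂ k, {x | 0 ≤ L k x}

/-- `F` is a face of `P`: the intersection of `P` with the zero locus of a
nonzero affine function that is nonnegative on `P`. -/
def IsFaceOf {n : ℕ} (P F : Set (Euc n)) : Prop :=
  ∃ ℓ : Euc n →ᵃ[ℝ] ℝ, ℓ ≠ 0 ∧ (∀ y ∈ P, 0 ≤ ℓ y) ∧ F = {y ∈ P | ℓ y = 0}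

/-- A facet: a face spanning an affine subspace of dimension `n − 1`. -/
def IsFacetOf {n : ℕ} (P F : Set (Euc n)) : Prop :=
  IsFaceOf P F ∧ Module.finrank ℝ (vectorSpan ℝ F) + 1 = n

/-- A simple polytope: every vertex lies on exactly `n` facets. -/
def IsSimplePolytope {n : ℕ} (P : Set (Euc n)) : Prop :=
  IsPolytope P ∧ ∀ v : Euc n, IsFaceOf P {v} →
    {F : Set (Euc n) | IsFacetOf P F ∧ v ∈ F}.ncard = n

/-- An `n`-dimensional system `𝒫 = (P, μ, σ)`: a simple polytope `P ⊆ ℝⁿ`, a flat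
measure `μ` on `P` (a positive constant multiple of Lebesgue measure restricted
to `P`), and a flat measure `σ` on `∂P` (supported on the boundary and, on each
facet, a positive constant multiple of `(n−1)`-dimensional Hausdorff measure). -/
structure NSystem (n : ℕ) where
  P : Set (Euc n)
  μ : Measure (Euc n)
  σ : Measure (Euc n)
  simple : IsSimplePolytope P
  flat : ∃ c : ℝ, 0 < c ∧ μ = ENNReal.ofReal c • volume.restrict P
  bdry_supp : σ (frontier P)ᶜ = 0
  flat_bdry : ∀ F : Set (Euc n), IsFacetOf P F →
    ∃ c : ℝ, 0 < c ∧ σ.restrict F =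
      ENNReal.ofReal c • (Measure.hausdorffMeasure ((n : ℝ) - 1)).restrict F

/-- `y log y`, computed via the real value of `y ∈ [0,∞]`. -/
def xlogx (y : ℝ≥0∞) : ℝ := y.toReal * Real.log y.toReal

/-- `∫_A u log u dμ ∈ (−∞, ∞]`, as an extended real number. -/
def entOn {n : ℕ} (μ : Measure (Euc n)) (A : Set (Euc n)) (u : Euc n → ℝ≥0∞) : EReal :=
  ((∫⁻ x in A, ENNReal.ofReal (xlogx (u x)) ∂μ : ℝ≥0∞) : EReal)
    - ((∫⁻ x in A, ENNReal.ofReal (-(xlogx (u x))) ∂μ : ℝ≥0∞) : EReal)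

/-- `u : P → (0,∞]` is log-convex: `u((1−t)x+ty) ≤ u(x)^{1−t} u(y)^t`. -/
def LogConvexOn {n : ℕ} (P : Set (Euc n)) (u : Euc n → ℝ≥0∞) : Prop :=
  ∀ ⦃x⦄, x ∈ P → ∀ ⦃y⦄, y ∈ P → ∀ ⦃t : ℝ⦄, 0 ≤ t → t ≤ 1 →
    u ((1 - t) • x + t • y) ≤ u x ^ (1 - t) * u y ^ t

/-- `ℳ^{exp,p}(P)`: lower semi-continuous log-convex `u : P → (0,∞]` with
`∫_P u dμ = μ(P)` and `∫_P u^p dμ < ∞`. -/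
def MExp {n : ℕ} (S : NSystem n) (p : ℝ) : Set (Euc n → ℝ≥0∞) :=
  {u | LowerSemicontinuousOn u S.P ∧ (∀ x ∈ S.P, 0 < u x) ∧ LogConvexOn S.P u ∧
    (∫⁻ x in S.P, u x ∂S.μ) = S.μ S.P ∧ (∫⁻ x in S.P, u x ^ p ∂S.μ) < ⊤}

/-- The nonequilibrium entropy `S_𝒫(u) = −(1/μ(P)) ∫_P u log u dμ ∈ [−∞, 0]`. -/
def Spf {n : ℕ} (S : NSystem n) (u : Euc n → ℝ≥0∞) : EReal :=
  (((S.μ S.P).toReal⁻¹ : ℝ) : EReal) *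
    (((∫⁻ x in S.P, ENNReal.ofReal (-(xlogx (u x))) ∂S.μ : ℝ≥0∞) : EReal)
      - ((∫⁻ x in S.P, ENNReal.ofReal (xlogx (u x)) ∂S.μ : ℝ≥0∞) : EReal))

/-- The internal μ-energy `U_𝒫(u) = (1/μ(P)) ∫_{∂P} u dσ ∈ (0, ∞]`. -/
def Upf {n : ℕ} (S : NSystem n) (u : Euc n → ℝ≥0∞) : ℝ≥0∞ :=
  (S.μ S.P)⁻¹ * ∫⁻ x in frontier S.P, u x ∂S.σ

/-- The free μ-energy `F_𝒫(T,u) = U_𝒫(u) − T·S_𝒫(u)` if `S_𝒫(u) > −∞`, else `∞`. -/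
def Fpf {n : ℕ} (S : NSystem n) (T : ℝ) (u : Euc n → ℝ≥0∞) : EReal :=
  if Spf S u = ⊥ then ⊤ else (Upf S u : EReal) - (T : EReal) * Spf S u

/-- `u` is the μ-canonical distribution of temperature `T ≥ 0`: for `T > 0` the
minimizer of `F_𝒫(T,·)` on `ℳ^{exp,1}(P)`; for `T = 0` the minimizer of `U_𝒫`
maximizing `S_𝒫` among all minimizers of `U_𝒫`. -/
def IsCanonical {n : ℕ} (S : NSystem n) (T : ℝ) (u : Euc n → ℝ≥0∞) : Prop :=
  u ∈ MExp S 1 ∧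
  (0 < T → ∀ u' ∈ MExp S 1, Fpf S T u ≤ Fpf S T u') ∧
  (T = 0 → (∀ u' ∈ MExp S 1, Upf S u ≤ Upf S u') ∧
    ∀ u' ∈ MExp S 1, (∀ u'' ∈ MExp S 1, Upf S u' ≤ Upf S u'') → Spf S u' ≤ Spf S u)


lemma aux_geom (a b : ℝ≥0) (t : ℝ) (h0 : 0 ≤ t) (h1 : t ≤ 1) :
    (a : ℝ≥0∞) ^ (1 - t) * (b : ℝ≥0∞) ^ t ≤ ENNReal.ofReal (1 - t) * a + b := by
  have h := NNReal.geom_mean_le_arith_mean2_weighted (1 - t).toNNReal t.toNNReal a b (by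
    rw [← Real.toNNReal_add (by linarith) h0]; simp)
  rw [Real.coe_toNNReal _ (by linarith), Real.coe_toNNReal _ h0] at h
  rw [← ENNReal.coe_rpow_of_nonneg _ (by linarith), ← ENNReal.coe_rpow_of_nonneg _ h0]
  have h2 : t.toNNReal * b ≤ b := by
    have : t.toNNReal ≤ 1 := by simpa using h1
    calc t.toNNReal * b ≤ 1 * b := by gcongr
      _ = b := one_mul b
  unfold ENNReal.ofReal
  exact_mod_cast h.trans (by gcongr)

lemma aux_ptwise {n : ℕ} {P : Set (Euc n)} (hPc : Convex ℝ P) (hPm : MeasurableSet P)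
    (hv : volume P ≠ 0)
    (u : ℕ → Euc n → ℝ≥0∞) (uinf : Euc n → ℝ≥0∞) (hlog : ∀ i, LogConvexOn P (u i))
    (hlsc : LowerSemicontinuousOn uinf P)
    (hfin : ∀ᵐ y ∂(volume.restrict P), uinf y ≠ ⊤)
    (hae : ∀ᵐ y ∂(volume.restrict P), Tendsto (fun i => u i y) atTop (𝓝 (uinf y)))
    (x : Euc n) (hx : x ∈ P) (b : ℝ≥0) (hb : ∀ i, u i x ≤ b) : uinf x ≤ b := by
  set s : ℕ → ℝ := fun k => 1 / ((k : ℝ) + 1) with hs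
  have hs0 : ∀ k, 0 < s k := fun k => by positivity
  have hs1 : ∀ k, s k ≤ 1 := fun k => by
    simp only [hs]; rw [div_le_one (by positivity)]; linarith [(Nat.cast_nonneg k : (0:ℝ) ≤ k)]
  have hslim : Tendsto s atTop (𝓝 0) := tendsto_one_div_add_atTop_nhds_zero_nat
  rw [ae_restrict_iff' hPm] at hae hfin
  have hpull : ∀ k, ∀ᵐ y ∂(volume : Measure (Euc n)), (s k • y + (1 - s k) • x ∈ P →
      Tendsto (fun i => u i (s k • y + (1 - s k) • x)) atTop
        (𝓝 (uinf (s k • y + (1 - s k) • x)))) := by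
    intro k
    have hq : Measure.QuasiMeasurePreserving (fun y : Euc n => s k • y + (1 - s k) • x)
        volume volume := by
      refine ⟨by fun_prop, ?_⟩
      refine Measure.AbsolutelyContinuous.mk fun A hA h0 => ?_
      rw [Measure.map_apply (by fun_prop) hA]
      have : (fun y : Euc n => s k • y + (1 - s k) • x) ⁻¹' A
          = (fun y : Euc n => s k • y) ⁻¹' ((fun z => z + (1 - s k) • x) ⁻¹' A) := rfl
      rw [this, Measure.addHaar_preimage_smul _ (hs0 k).ne', measure_preimage_add_right, h0,
        mul_zero]
    exact hq.ae hae
  have hall : ∀ᵐ y ∂(volume : Measure (Euc n)), (y ∈ P → uinf y ≠ ⊤) ∧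
      (y ∈ P → Tendsto (fun i => u i y) atTop (𝓝 (uinf y))) ∧
      ∀ k, (s k • y + (1 - s k) • x ∈ P →
      Tendsto (fun i => u i (s k • y + (1 - s k) • x)) atTop
        (𝓝 (uinf (s k • y + (1 - s k) • x)))) := by
    filter_upwards [hfin, hae, ae_all_iff.2 hpull] with y h1 h2 h3 using ⟨h1, h2, h3⟩
  obtain ⟨y, hyP, hy⟩ : ∃ y ∈ P, _ := by
    by_contra! hcon
    apply hv
    refine measure_mono_null (fun y hy => ?_) (ae_iff.1 hall)
    exact hcon y hy
  obtain ⟨h1, h2, h3⟩ := hy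
  have hzP : ∀ k, s k • y + (1 - s k) • x ∈ P := fun k =>
    hPc hyP hx (hs0 k).le (by linarith [hs1 k]) (by ring)
  lift uinf y to ℝ≥0 using h1 hyP with a ha
  have hbd : ∀ k, uinf (s k • y + (1 - s k) • x) ≤ ENNReal.ofReal (s k) * a + b := by
    intro k
    have hb' : ∀ i, u i (s k • y + (1 - s k) • x) ≤ u i y ^ s k * (b : ℝ≥0∞) ^ (1 - s k) := by
      intro i
      have := hlog i hyP hx (t := 1 - s k) (by linarith [hs1 k]) (by linarith [hs0 k])
      rw [sub_sub_cancel] at this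
      refine this.trans ?_
      gcongr
      · linarith [hs1 k]
      · exact hb i
    have hl : Tendsto (fun i => u i y ^ s k * (b : ℝ≥0∞) ^ (1 - s k)) atTop
        (𝓝 ((a : ℝ≥0∞) ^ s k * (b : ℝ≥0∞) ^ (1 - s k))) := by
      refine ENNReal.Tendsto.mul_const ?_ (Or.inr ?_)
      · exact ((ENNReal.continuous_rpow_const (y := s k)).tendsto _).comp (h2 hyP)
      · exact ENNReal.rpow_ne_top_of_nonneg (by linarith [hs1 k]) ENNReal.coe_ne_top
    refine (le_of_tendsto_of_tendsto' (h3 k (hzP k)) hl hb').trans ?_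
    have := aux_geom a b (1 - s k) (by linarith [hs1 k]) (by linarith [hs0 k])
    rwa [sub_sub_cancel] at this
  refine le_of_forall_lt fun c hc => ?_
  by_contra! hcon
  obtain ⟨d, hd1, hd2⟩ := exists_between hc
  have hzx : Tendsto (fun k => s k • y + (1 - s k) • x) atTop (𝓝[P] x) := by
    refine tendsto_nhdsWithin_iff.2 ⟨?_, Eventually.of_forall hzP⟩
    have : Tendsto (fun k => s k • y + (1 - s k) • x) atTop
        (𝓝 ((0 : ℝ) • y + (1 - (0 : ℝ)) • x)) :=
      (hslim.smul_const y).add ((tendsto_const_nhds.sub hslim).smul_const x)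
    simpa using this
  have hev := hzx.eventually (hlsc x hx d hd2)
  have hlim : Tendsto (fun k => ENNReal.ofReal (s k) * (a : ℝ≥0∞) + b) atTop (𝓝 (b : ℝ≥0∞)) := by
    have h0 : Tendsto (fun k => ENNReal.ofReal (s k)) atTop (𝓝 0) := by
      simpa using ENNReal.tendsto_ofReal hslim
    have := (ENNReal.Tendsto.mul_const (b := (a : ℝ≥0∞)) h0 (Or.inr ENNReal.coe_ne_top)).add
      (tendsto_const_nhds (x := (b : ℝ≥0∞)))
    simpa using this
  have : d ≤ b := ge_of_tendsto hlim (hev.mono fun k hk => hk.le.trans (hbd k))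
  exact absurd (hd1.trans_le this) (not_lt.2 hcon)

lemma aux_meas {n : ℕ} {P : Set (Euc n)} (hP : MeasurableSet P) (ν : Measure (Euc n))
    {u : Euc n → ℝ≥0∞} (h : LowerSemicontinuousOn u P) : AEMeasurable u (ν.restrict P) := by
  apply aemeasurable_restrict_of_measurable_subtype hP
  exact (lowerSemicontinuous_restrict_iff.2 h).measurable

lemma aux_inMeasure {α : Type*} [MeasurableSpace α] (ν : Measure α)
    (u : ℕ → α → ℝ≥0∞) (v : α → ℝ≥0∞) (hm : ∀ i, AEMeasurable (u i) ν) (hv : AEMeasurable v ν)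
    (hu : ∀ i, ∫⁻ x, u i x ∂ν ≠ ⊤) (hvf : ∫⁻ x, v x ∂ν ≠ ⊤)
    (hL1 : Tendsto (fun i => ∫⁻ x, ((u i x - v x) + (v x - u i x)) ∂ν) atTop (𝓝 0)) :
    TendstoInMeasure ν (fun i x => (u i x).toReal) atTop (fun x => (v x).toReal) := by
  refine tendstoInMeasure_of_tendsto_eLpNorm (p := 1) one_ne_zero
    (fun i => (hm i).ennreal_toReal.aestronglyMeasurable)
    hv.ennreal_toReal.aestronglyMeasurable ?_
  refine hL1.congr fun i => ?_
  rw [eLpNorm_one_eq_lintegral_enorm]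
  refine lintegral_congr_ae ?_
  filter_upwards [ae_lt_top' (hm i) (hu i), ae_lt_top' hv hvf] with x h1 h2
  simp only [Pi.sub_apply]
  lift u i x to ℝ≥0 using h1.ne with a
  lift v x to ℝ≥0 using h2.ne with b
  simp only [ENNReal.coe_toReal]
  rw [Real.enorm_eq_ofReal_abs]
  rcases le_total a b with h | h
  · have : (a : ℝ) ≤ b := by exact_mod_cast h
    rw [abs_of_nonpos (by linarith), tsub_eq_zero_of_le (by exact_mod_cast h), zero_add, neg_sub,
      ENNReal.ofReal_sub _ (by positivity)]
    simp
  · have : (b : ℝ) ≤ a := by exact_mod_cast h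
    rw [abs_of_nonneg (by linarith), tsub_eq_zero_of_le (a := (b : ℝ≥0∞)) (by exact_mod_cast h),
      add_zero, ENNReal.ofReal_sub _ (by positivity)]
    simp

lemma aux_tail {p : ℝ} (hp : 1 < p) (η : ℝ) (hη : 0 < η) :
    ∃ B : ℝ, 0 ≤ B ∧ ∀ y : ℝ, 0 ≤ y → |y * Real.log y| ≤ B ∨ |y * Real.log y| ≤ η * y ^ p := by
  have h := (isLittleO_log_rpow_atTop (r := p - 1) (by linarith)).bound hη
  obtain ⟨N, hN⟩ := eventually_atTop.1 (h.and (eventually_ge_atTop 1))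
  obtain ⟨B, hB⟩ := (isCompact_Icc (a := (0 : ℝ)) (b := N)).exists_bound_of_continuousOn
    (f := fun y => y * Real.log y) Real.continuous_mul_log.continuousOn
  refine ⟨max B 0, le_max_right _ _, fun y hy => ?_⟩
  rcases le_total y N with hyN | hyN
  · left
    exact (hB y ⟨hy, hyN⟩).trans (le_max_left _ _)
  · right
    obtain ⟨h1, h2⟩ := hN y hyN
    have hy0 : 0 < y := by linarith
    rw [Real.norm_eq_abs, Real.norm_eq_abs, abs_of_nonneg (Real.rpow_nonneg hy _)] at h1
    rw [abs_mul, abs_of_nonneg hy]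
    calc y * |Real.log y| ≤ y * (η * y ^ (p - 1)) := by gcongr
      _ = η * y ^ p := by
        rw [Real.rpow_sub_one hy0.ne']; field_simp

lemma aux_pow (y : ℝ≥0∞) {p : ℝ} (hp : 0 ≤ p) : ENNReal.ofReal (y.toReal ^ p) ≤ y ^ p := by
  rw [ENNReal.toReal_rpow]
  exact ENNReal.ofReal_toReal_le

lemma aux_ent {α : Type*} [MeasurableSpace α] (ν : Measure α) [IsFiniteMeasure ν]
    (u : ℕ → α → ℝ≥0∞) (v : α → ℝ≥0∞) (hm : ∀ i, AEMeasurable (u i) ν) (hv : AEMeasurable v ν)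
    (hT : TendstoInMeasure ν (fun i x => (u i x).toReal) atTop (fun x => (v x).toReal))
    (p : ℝ) (hp : 1 < p) (C : ℝ) (hC : 0 < C)
    (hu : ∀ i, ∫⁻ x, u i x ^ p ∂ν ≤ ENNReal.ofReal C)
    (hvC : ∫⁻ x, v x ^ p ∂ν ≤ ENNReal.ofReal C) :
    MemLp (fun x => xlogx (v x)) 1 ν ∧
    Tendsto (fun i => eLpNorm ((fun x => xlogx (u i x)) - fun x => xlogx (v x)) 1 ν)
      atTop (𝓝 0) := by
  have hcont : Continuous (fun y : ℝ => y * Real.log y) := Real.continuous_mul_log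
  have hms : ∀ {w : α → ℝ≥0∞}, AEMeasurable w ν →
      AEStronglyMeasurable (fun x => xlogx (w x)) ν := fun hw =>
    (hcont.measurable.comp_aemeasurable hw.ennreal_toReal).aestronglyMeasurable
  have hmem : MemLp (fun x => xlogx (v x)) 1 ν := by
    refine ⟨hms hv, ?_⟩
    obtain ⟨B, hB0, hB⟩ := aux_tail hp 1 one_pos
    rw [eLpNorm_one_eq_lintegral_enorm]
    calc ∫⁻ x, ‖xlogx (v x)‖ₑ ∂ν ≤ ∫⁻ x, (ENNReal.ofReal B + v x ^ p) ∂ν := by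
          refine lintegral_mono fun x => ?_
          rw [Real.enorm_eq_ofReal_abs]
          rcases hB (v x).toReal ENNReal.toReal_nonneg with h | h
          · exact (ENNReal.ofReal_le_ofReal h).trans le_self_add
          · rw [one_mul] at h
            exact ((ENNReal.ofReal_le_ofReal h).trans (aux_pow _ (by linarith))).trans le_add_self
      _ = ENNReal.ofReal B * ν Set.univ + ∫⁻ x, v x ^ p ∂ν := by
          rw [lintegral_add_left measurable_const, lintegral_const]
      _ < ⊤ := ENNReal.add_lt_top.2 ⟨ENNReal.mul_lt_top ENNReal.ofReal_lt_top (measure_lt_top _ _),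
          hvC.trans_lt ENNReal.ofReal_lt_top⟩
  refine ⟨hmem, ?_⟩
  have hui : UnifIntegrable (fun i x => xlogx (u i x)) 1 ν := by
    refine unifIntegrable_of le_rfl ENNReal.one_ne_top (fun i => hms (hm i)) fun ε hε => ?_
    obtain ⟨B, hB0, hB⟩ := aux_tail hp (ε / C) (by positivity)
    obtain ⟨D, hD⟩ : ∃ D : ℝ≥0, (D : ℝ) = B + 1 :=
      ⟨(B + 1).toNNReal, Real.coe_toNNReal _ (by linarith)⟩
    refine ⟨D, fun i => ?_⟩
    rw [eLpNorm_one_eq_lintegral_enorm]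
    calc _ ≤ ∫⁻ x, ENNReal.ofReal (ε / C) * u i x ^ p ∂ν := by
          refine lintegral_mono fun x => ?_
          by_cases hx : x ∈ {x | D ≤ ‖xlogx (u i x)‖₊}
          · rw [Set.indicator_of_mem hx, Real.enorm_eq_ofReal_abs]
            have hx' : (D : ℝ) ≤ |xlogx (u i x)| := hx
            rcases hB (u i x).toReal ENNReal.toReal_nonneg with h | h
            · unfold xlogx at hx'; linarith
            · refine (ENNReal.ofReal_le_ofReal h).trans ?_
              rw [ENNReal.ofReal_mul (by positivity)]
              gcongr
              exact aux_pow _ (by linarith)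
          · rw [Set.indicator_of_notMem hx]; simp
      _ = ENNReal.ofReal (ε / C) * ∫⁻ x, u i x ^ p ∂ν :=
          lintegral_const_mul' _ _ ENNReal.ofReal_ne_top
      _ ≤ ENNReal.ofReal (ε / C) * ENNReal.ofReal C := by gcongr; exact hu i
      _ = ENNReal.ofReal ε := by
          rw [← ENNReal.ofReal_mul (by positivity), div_mul_cancel₀ _ hC.ne']
  refine tendsto_of_subseq_tendsto fun ns hns => ?_
  obtain ⟨ms, _, hms'⟩ := (show TendstoInMeasure ν (fun i x => (u (ns i) x).toReal) atTop
    (fun x => (v x).toReal) from fun ε hε => (hT ε hε).comp hns).exists_seq_tendsto_ae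
  refine ⟨ms, tendsto_Lp_finite_of_tendsto_ae (f := fun i x => xlogx (u (ns (ms i)) x))
    le_rfl ENNReal.one_ne_top (fun i => hms (hm _)) hmem
    (fun ε hε => ?_) ?_⟩
  · obtain ⟨δ, hδ, hδ'⟩ := hui hε
    exact ⟨δ, hδ, fun i s hs hμs => hδ' _ s hs hμs⟩
  · filter_upwards [hms'] with x hx
    exact (hcont.tendsto _).comp hx

lemma aux_lint {α : Type*} [MeasurableSpace α] (ν : Measure α) (g : ℕ → α → ℝ) (h : α → ℝ)
    (hg : ∀ i, AEMeasurable (g i) ν) (hh : MemLp h 1 ν)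
    (hT : Tendsto (fun i => eLpNorm (g i - h) 1 ν) atTop (𝓝 0)) :
    Tendsto (fun i => ∫⁻ x, ENNReal.ofReal (g i x) ∂ν) atTop
      (𝓝 (∫⁻ x, ENNReal.ofReal (h x) ∂ν)) ∧ ∫⁻ x, ENNReal.ofReal (h x) ∂ν ≠ ⊤ := by
  have hfin : ∫⁻ x, ENNReal.ofReal (h x) ∂ν ≠ ⊤ := by
    have := hh.2
    rw [eLpNorm_one_eq_lintegral_enorm] at this
    refine ((lintegral_mono fun x => ?_).trans_lt this).ne
    exact Real.ofReal_le_enorm _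
  have hhm := hh.1.aemeasurable
  have key : ∀ a b : ℝ, ENNReal.ofReal a ≤ ENNReal.ofReal b + ‖a - b‖ₑ := fun a b => by
    calc ENNReal.ofReal a = ENNReal.ofReal (b + (a - b)) := by ring_nf
      _ ≤ ENNReal.ofReal b + ENNReal.ofReal (a - b) := ENNReal.ofReal_add_le
      _ ≤ _ := by gcongr; exact Real.ofReal_le_enorm _
  have h1 : ∀ i, ∫⁻ x, ENNReal.ofReal (g i x) ∂ν
      ≤ ∫⁻ x, ENNReal.ofReal (h x) ∂ν + eLpNorm (g i - h) 1 ν := fun i => by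
    rw [eLpNorm_one_eq_lintegral_enorm, ← lintegral_add_left' hhm.ennreal_ofReal]
    exact lintegral_mono fun x => key _ _
  have h2 : ∀ i, ∫⁻ x, ENNReal.ofReal (h x) ∂ν - eLpNorm (g i - h) 1 ν
      ≤ ∫⁻ x, ENNReal.ofReal (g i x) ∂ν := fun i => by
    rw [tsub_le_iff_right, eLpNorm_one_eq_lintegral_enorm,
      ← lintegral_add_left' (hg i).ennreal_ofReal]
    refine lintegral_mono fun x => ?_
    simp only [Pi.sub_apply]
    rw [← enorm_neg, neg_sub]
    exact key _ _
  refine ⟨tendsto_of_tendsto_of_tendsto_of_le_of_le ?_ ?_ h2 h1, hfin⟩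
  · simpa using ENNReal.Tendsto.sub (tendsto_const_nhds (x := ∫⁻ x, ENNReal.ofReal (h x) ∂ν))
      hT (Or.inl hfin)
  · simpa using (tendsto_const_nhds (x := ∫⁻ x, ENNReal.ofReal (h x) ∂ν)).add hT

lemma aux_ereal {a b : ℕ → ℝ≥0∞} {A B : ℝ≥0∞} {r : ℝ} (hr : r ≠ 0)
    (ha : Tendsto a atTop (𝓝 A)) (hb : Tendsto b atTop (𝓝 B)) (hA : A ≠ ⊤) :
    Tendsto (fun i => (r : EReal) * ((a i : EReal) - (b i : EReal))) atTop
      (𝓝 ((r : EReal) * ((A : EReal) - (B : EReal)))) := by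
  have hA' := (continuous_coe_ennreal_ereal.tendsto _).comp ha
  have hB' := ((continuous_coe_ennreal_ereal.tendsto _).comp hb).neg
  have hcA := EReal.continuousAt_add (p := ((A : EReal), -(B : EReal)))
    (Or.inl (by simpa using hA)) (Or.inl (by simp))
  have hE := hcA.tendsto.comp (hA'.prodMk_nhds hB')
  have hcm := EReal.continuousAt_mul (p := ((r : EReal), (A : EReal) + -(B : EReal)))
    (Or.inl (by simpa using hr)) (Or.inl (by simpa using hr)) (Or.inl (by simp)) (Or.inl (by simp))
  exact hcm.tendsto.comp (tendsto_const_nhds.prodMk_nhds hE)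

/-- Semicontinuity of the functionals: if `uᵢ → u∞` in `L¹(P,μ)` within
`ℳ^{exp,1}(P)`, then `U_𝒫(u∞) ≤ liminf U_𝒫(uᵢ)`; if moreover the `L^p`-norms of
`uᵢ, u∞` are bounded for some `p > 1`, then `S_𝒫(uᵢ) → S_𝒫(u∞)`. -/
theorem semicontinuity_of_functionals (n : ℕ) (S : NSystem n)
    (u : ℕ → Euc n → ℝ≥0∞) (uinf : Euc n → ℝ≥0∞)
    (hu : ∀ i, u i ∈ MExp S 1) (huinf : uinf ∈ MExp S 1)
    (hL1 : Tendsto (fun i => ∫⁻ x in S.P,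
        ((u i x - uinf x) + (uinf x - u i x)) ∂S.μ) atTop (𝓝 0)) :
    Upf S uinf ≤ Filter.liminf (fun i => Upf S (u i)) atTop ∧
    (∀ p : ℝ, 1 < p → ∀ C : ℝ, 0 < C →
      (∀ i, ∫⁻ x in S.P, u i x ^ p ∂S.μ ≤ ENNReal.ofReal C) →
      (∫⁻ x in S.P, uinf x ^ p ∂S.μ ≤ ENNReal.ofReal C) →
      Tendsto (fun i => Spf S (u i)) atTop (𝓝 (Spf S uinf))) := by
  obtain ⟨hPcomp, hPint, m, L, -, hPL⟩ := S.simple.1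
  obtain ⟨c, hc, hμ⟩ := S.flat
  have hPc : Convex ℝ S.P := by
    rw [hPL]
    refine convex_iInter fun k => ?_
    exact (convex_Ici (0 : ℝ)).affine_preimage (L k)
  have hPm : MeasurableSet S.P := hPcomp.isClosed.measurableSet
  have hv : volume S.P ≠ 0 :=
    ((isOpen_interior.measure_pos _ hPint).trans_le (measure_mono interior_subset)).ne'
  have hν : S.μ.restrict S.P = ENNReal.ofReal c • volume.restrict S.P := by
    rw [hμ, Measure.restrict_smul, Measure.restrict_restrict hPm, Set.inter_self]
  have hc0 : ENNReal.ofReal c ≠ 0 := by simpa using hc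
  have hae : ∀ {q : Euc n → Prop}, (∀ᵐ x ∂(S.μ.restrict S.P), q x) →
      ∀ᵐ x ∂(volume.restrict S.P), q x := by
    intro q hq
    rw [hν] at hq
    exact (Measure.ae_ennreal_smul_measure_iff hc0).1 hq
  have hvtop : volume S.P ≠ ⊤ := hPcomp.measure_ne_top
  have hμP : S.μ S.P = ENNReal.ofReal c * volume S.P := by
    rw [hμ]; simp
  have hμtop : S.μ S.P ≠ ⊤ := by
    rw [hμP]; exact ENNReal.mul_ne_top ENNReal.ofReal_ne_top hvtop
  have hμ0 : S.μ S.P ≠ 0 := by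
    rw [hμP]; exact mul_ne_zero hc0 hv
  haveI : IsFiniteMeasure (S.μ.restrict S.P) := ⟨by
    rw [Measure.restrict_apply_univ]; exact hμtop.lt_top⟩
  have hm : ∀ i, AEMeasurable (u i) (S.μ.restrict S.P) := fun i => aux_meas hPm _ (hu i).1
  have hmi : AEMeasurable uinf (S.μ.restrict S.P) := aux_meas hPm _ huinf.1
  have hif : ∀ i, ∫⁻ x in S.P, u i x ∂S.μ ≠ ⊤ := fun i => by rw [(hu i).2.2.2.1]; exact hμtop
  have hiif : ∫⁻ x in S.P, uinf x ∂S.μ ≠ ⊤ := by rw [huinf.2.2.2.1]; exact hμtop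
  have hT := aux_inMeasure _ u uinf hm hmi hif hiif hL1
  constructor
  · have hpt : ∀ x ∈ S.P, uinf x ≤ liminf (fun i => u i x) atTop := by
      intro x hx
      refine le_of_forall_gt fun b hb => ?_
      obtain ⟨d, hd1, hd2⟩ := exists_between hb
      lift d to ℝ≥0 using hd2.ne_top
      refine lt_of_le_of_lt ?_ hd2
      have hfr : ∃ᶠ i in atTop, u i x < d := frequently_lt_of_liminf_lt (by isBoundedDefault) hd1
      obtain ⟨φ, hφ, hφd⟩ := extraction_of_frequently_atTop hfr
      obtain ⟨ms, _, hms⟩ := (show TendstoInMeasure (S.μ.restrict S.P)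
        (fun i x => (u (φ i) x).toReal) atTop (fun x => (uinf x).toReal) from
          fun ε hε => (hT ε hε).comp hφ.tendsto_atTop).exists_seq_tendsto_ae
      refine aux_ptwise hPc hPm hv (fun i => u (φ (ms i))) uinf (fun i => (hu _).2.2.1) huinf.1
        (hae ?_) (hae ?_) x hx d (fun i => (hφd _).le)
      · filter_upwards [ae_lt_top' hmi hiif] with y hy using hy.ne
      · filter_upwards [ae_lt_top' hmi hiif, hms,
          ae_all_iff.2 fun i => ae_lt_top' (hm i) (hif i)] with y h1 h2 h3
        exact (ENNReal.tendsto_toReal_iff (fun i => (h3 _).ne) h1.ne).1 h2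
    have hfP : frontier S.P ⊆ S.P := hPcomp.isClosed.frontier_subset
    unfold Upf
    rw [ENNReal.liminf_const_mul_of_ne_zero_of_ne_top (ENNReal.inv_ne_zero.2 hμtop)
      (ENNReal.inv_ne_top.2 hμ0)]
    gcongr
    calc ∫⁻ x in frontier S.P, uinf x ∂S.σ
        ≤ ∫⁻ x in frontier S.P, liminf (fun i => u i x) atTop ∂S.σ :=
          setLIntegral_mono' isClosed_frontier.measurableSet fun x hx => hpt x (hfP hx)
      _ ≤ _ := lintegral_liminf_le' fun i =>
          (aux_meas hPm S.σ (hu i).1).mono_measure (Measure.restrict_mono hfP le_rfl)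
  · intro p hp C hC hui hinf
    obtain ⟨hmem, hlim⟩ := aux_ent _ u uinf hm hmi hT p hp C hC hui hinf
    have hxm : ∀ i, AEMeasurable (fun x => xlogx (u i x)) (S.μ.restrict S.P) := fun i =>
      Real.continuous_mul_log.measurable.comp_aemeasurable (hm i).ennreal_toReal
    obtain ⟨hp1, hp2⟩ := aux_lint _ _ _ hxm hmem hlim
    obtain ⟨hn1, hn2⟩ := aux_lint _ (fun i x => -xlogx (u i x)) (fun x => -xlogx (uinf x))
      (fun i => (hxm i).neg) hmem.neg (by
        refine hlim.congr fun i => ?_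
        rw [← eLpNorm_neg]
        congr 1
        ext x
        simp only [Pi.neg_apply, Pi.sub_apply]
        ring)
    exact aux_ereal (inv_ne_zero (ENNReal.toReal_ne_zero.2 ⟨hμ0, hμtop⟩)) hn1 hp1 hn2

end
end

section
/- Let 𝒫 = (P, μ, σ) be an n-dimensional system. Then for every T ∈ ℝ there exists u ∈ ℳ^{exp, n/(n−1)}(P) such that F_𝒫(T, u) ≤ F_𝒫(T, u') for every u' ∈ ℳ^{exp,1}(P). -/
open MeasureTheory Filter Topology
open scoped ENNReal NNReal

noncomputable section

def prjA {m : ℕ} (i : Fin (m+1)) (x : Euc (m+1)) : Fin m → ℝ := fun j => x (i.succAbove j)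

lemma slabA {m : ℕ} (i : Fin (m+1)) (R : ℝ) (A : Set (Fin m → ℝ)) :
    volume {x : Euc (m+1) | |x i| ≤ R ∧ prjA i x ∈ A} = ENNReal.ofReal (2 * R) * volume A := by
  have h1 := (EuclideanSpace.volume_preserving_symm_measurableEquiv_toLp (Fin (m+1)))
  have h2 := volume_preserving_piFinSuccAbove (fun _ : Fin (m+1) => ℝ) i
  have e : {x : Euc (m+1) | |x i| ≤ R ∧ prjA i x ∈ A} =
      (MeasurableEquiv.toLp 2 (Fin (m+1) → ℝ)).symm ⁻¹'
        ((MeasurableEquiv.piFinSuccAbove (fun _ : Fin (m+1) => ℝ) i) ⁻¹' (Set.Icc (-R) R ×ˢ A)) := by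
    ext x
    simp only [Set.mem_ofPred_eq, Set.mem_preimage, Set.mem_prod, Set.mem_Icc, abs_le]
    rfl
  rw [e, h1.measure_preimage_equiv, h2.measure_preimage_equiv]
  change (volume.prod volume) _ = _
  rw [Measure.prod_prod, Real.volume_Icc]
  congr 2; ring

lemma prjA_lip {m : ℕ} (i : Fin (m+1)) : LipschitzWith 1 (prjA i) := by
  refine LipschitzWith.of_dist_le_mul fun x y => ?_
  rw [NNReal.coe_one, one_mul, dist_pi_le_iff dist_nonneg]
  intro j
  have := PiLp.norm_apply_le (x - y) (i.succAbove j)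
  simpa [prjA, dist_eq_norm] using this

lemma volA_le {m : ℕ} (i : Fin (m+1)) (B : Set (Euc (m+1))) :
    volume (prjA i '' B) ≤ Measure.hausdorffMeasure (((m+1 : ℕ) : ℝ) - 1) B := by
  have := (prjA_lip i).hausdorffMeasure_image_le (d := (m:ℝ)) (by positivity) B
  have h := hausdorffMeasure_pi_real (ι := Fin m)
  rw [Fintype.card_fin] at h
  rw [h] at this
  have h3 : (((m+1 : ℕ) : ℝ) - 1) = m := by push_cast; ring
  rw [h3]
  simpa using this

def QA {n : ℕ} (L : Euc n →ᵃ[ℝ] ℝ) (i : Fin n) (x : Euc n) : Euc n :=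
  x - (L x / L.linear (EuclideanSpace.single i 1)) • EuclideanSpace.single i 1

lemma LQA {n : ℕ} (L : Euc n →ᵃ[ℝ] ℝ) (i : Fin n) (ha : L.linear (EuclideanSpace.single i 1) ≠ 0)
    (x : Euc n) : L (QA L i x) = 0 := by
  have : QA L i x = (-(L x / L.linear (EuclideanSpace.single i 1)) • EuclideanSpace.single i (1:ℝ)) +ᵥ x := by
    simp [QA, sub_eq_add_neg, add_comm]
  rw [this, AffineMap.map_vadd, map_smul]
  simp
  field_simp
  ring

lemma affcont {n : ℕ} (L : Euc n →ᵃ[ℝ] ℝ) : Continuous L := AffineMap.continuous_of_finiteDimensional L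

lemma QA_cont {n : ℕ} (L : Euc n →ᵃ[ℝ] ℝ) (i : Fin n) : Continuous (QA L i) := by
  have := affcont L
  unfold QA
  fun_prop

lemma frontier_of_zero {n : ℕ} {P : Set (Euc n)} {L : Euc n →ᵃ[ℝ] ℝ} (hL : L.linear ≠ 0)
    (hLP : ∀ y ∈ P, 0 ≤ L y) {y : Euc n} (hy : y ∈ P) (h0 : L y = 0) : y ∈ frontier P := by
  refine ⟨subset_closure hy, fun hi => hL ?_⟩
  ext w
  have hc : Tendsto (fun t : ℝ => t • w + y) (𝓝 0) (𝓝 y) := by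
    have : Continuous (fun t : ℝ => t • w + y) := by fun_prop
    simpa using this.tendsto 0
  have hev := hc.eventually (mem_interior_iff_mem_nhds.1 hi)
  obtain ⟨e, he, hb⟩ := Metric.eventually_nhds_iff.1 hev
  have h1 := hLP _ (hb (y := e/2) (by simp [abs_of_pos he]; linarith))
  have h2 := hLP _ (hb (y := -(e/2)) (by simp [abs_of_pos he]; linarith))
  rw [← vadd_eq_add, AffineMap.map_vadd, h0, map_smul] at h1 h2
  simp at h1 h2
  simp only [LinearMap.zero_apply]
  nlinarith

lemma prj_null {m : ℕ} (i : Fin (m+1)) (G : Set (Euc (m+1)))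
    (h : Module.finrank ℝ (vectorSpan ℝ G) < m) : volume (prjA i '' G) = 0 := by
  let f : Euc (m+1) →ₗ[ℝ] (Fin m → ℝ) :=
    { toFun := prjA i, map_add' := fun _ _ => rfl, map_smul' := fun _ _ => rfl }
  have hne : affineSpan ℝ (prjA i '' G) ≠ ⊤ := by
    intro ht
    have h1 : vectorSpan ℝ (prjA i '' G) = ⊤ := by
      rw [← direction_affineSpan, ht, AffineSubspace.direction_top]
    have h2 : vectorSpan ℝ (prjA i '' G) = (vectorSpan ℝ G).map f := by
      have := (AffineMap.map_vectorSpan (k := ℝ) f.toAffineMap (s := G))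
      exact this.symm
    have h3 := Submodule.finrank_map_le f (vectorSpan ℝ G)
    rw [← h2, h1, finrank_top] at h3
    simp at h3
    omega
  exact measure_mono_null (subset_affineSpan ℝ _) (Measure.addHaar_affineSubspace volume _ hne)

lemma key_push {m : ℕ} (S : NSystem (m+1)) (hPc : IsClosed S.P) (L : Euc (m+1) →ᵃ[ℝ] ℝ)
    (hLP : ∀ y ∈ S.P, 0 ≤ L y) (i : Fin (m+1))
    (ha : L.linear (EuclideanSpace.single i 1) ≠ 0) (R : ℝ) :
    ∃ C : ℝ≥0∞, C ≠ ⊤ ∧ ∀ v : Euc (m+1) → ℝ≥0∞, Measurable v →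
      ∫⁻ x in {x | ∀ j, |x j| ≤ R}, S.P.indicator v (QA L i x) ≤
        C * ∫⁻ x in frontier S.P, v x ∂S.σ := by
  have hlin : L.linear ≠ 0 := by rintro h; simp [h] at ha
  have hL0 : L ≠ 0 := by rintro rfl; simp at ha
  set G := {y ∈ S.P | L y = 0} with hG
  have hGf : G ⊆ frontier S.P := fun y hy => frontier_of_zero hlin hLP hy.1 hy.2
  have hprj : ∀ x, prjA i (QA L i x) = prjA i x := by
    intro x; ext j
    simp [prjA, QA]
  have hQm : Measurable (QA L i) := (QA_cont L i).measurable
  have hGm : MeasurableSet G := (hPc.inter (isClosed_eq (affcont L) continuous_const)).measurableSet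
  -- bound
  have hb : ∀ B : Set (Euc (m+1)), volume ({x : Euc (m+1) | ∀ j, |x j| ≤ R} ∩ QA L i ⁻¹' (B ∩ S.P)) ≤
      ENNReal.ofReal (2*R) * volume (prjA i '' (B ∩ G)) := by
    intro B
    rw [← slabA]
    refine measure_mono ?_
    rintro x ⟨hx, hxB, hxP⟩
    exact ⟨hx i, QA L i x, ⟨hxB, hxP, LQA L i ha x⟩, hprj x⟩
  obtain ⟨C, hC, hCb⟩ : ∃ C : ℝ≥0∞, C ≠ ⊤ ∧ ∀ B, MeasurableSet B →
      volume (prjA i '' (B ∩ G)) ≤ C * S.σ (B ∩ G) := by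
    by_cases hf : IsFacetOf S.P G
    · obtain ⟨c, hc, hσ⟩ := S.flat_bdry G hf
      refine ⟨(ENNReal.ofReal c)⁻¹, by simp [hc], fun B hB => ?_⟩
      have h1 : S.σ (B ∩ G) = ENNReal.ofReal c * Measure.hausdorffMeasure (((m+1 : ℕ) : ℝ) - 1) (B ∩ G) := by
        have := congrArg (fun ν : Measure (Euc (m+1)) => ν B) hσ
        simpa [Measure.restrict_apply hB] using this
      rw [h1, ← mul_assoc, ENNReal.inv_mul_cancel (by simp [hc]) (by simp), one_mul]
      exact volA_le i _
    · refine ⟨0, by simp, fun B hB => ?_⟩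
      have hface : IsFaceOf S.P G := ⟨L, hL0, hLP, rfl⟩
      have hlt : Module.finrank ℝ (vectorSpan ℝ G) < m + 1 := by
        have hle : vectorSpan ℝ G ≤ LinearMap.ker L.linear := by
          rw [vectorSpan_def, Submodule.span_le]
          rintro _ ⟨a, ha', b, hb', rfl⟩
          simp only [SetLike.mem_coe, LinearMap.mem_ker, AffineMap.linearMap_vsub, ha'.2, hb'.2]
          simp
        have hne : LinearMap.ker L.linear ≠ ⊤ := by
          rw [Ne, LinearMap.ker_eq_top]; exact hlin
        have := Submodule.finrank_lt (lt_of_le_of_lt hle (lt_top_iff_ne_top.2 hne)).ne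
        simpa using this
      have hlt2 : Module.finrank ℝ (vectorSpan ℝ G) < m := by
        have : ¬ (Module.finrank ℝ (vectorSpan ℝ G) + 1 = m + 1) := fun h => hf ⟨hface, h⟩
        omega
      rw [measure_mono_null (Set.image_mono Set.inter_subset_right) (prj_null i G hlt2)]
      simp
  refine ⟨ENNReal.ofReal (2*R) * C, ENNReal.mul_ne_top ENNReal.ofReal_ne_top hC, fun v hv => ?_⟩
  set ν := ((volume : Measure (Euc (m+1))).restrict {x | ∀ j, |x j| ≤ R}).map (QA L i) with hν
  have h1 : ∫⁻ x in {x | ∀ j, |x j| ≤ R}, S.P.indicator v (QA L i x) = ∫⁻ x in S.P, v x ∂ν := by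
    rw [← lintegral_indicator hPc.measurableSet, hν,
      lintegral_map (hv.indicator hPc.measurableSet) hQm]
  have h2 : ν.restrict S.P ≤ (ENNReal.ofReal (2*R) * C) • S.σ.restrict (frontier S.P) := by
    refine Measure.le_iff.2 fun B hB => ?_
    rw [Measure.restrict_apply hB, hν, Measure.map_apply hQm (hB.inter hPc.measurableSet),
      Measure.restrict_apply (hQm (hB.inter hPc.measurableSet)), Set.inter_comm]
    refine (hb B).trans ?_
    rw [Measure.smul_apply, Measure.restrict_apply hB, smul_eq_mul, mul_assoc]
    gcongr
    refine (hCb B hB).trans ?_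
    gcongr
  rw [h1]
  refine (lintegral_mono' h2 le_rfl).trans ?_
  rw [lintegral_smul_measure, smul_eq_mul]

lemma exit_line {n m : ℕ} {P : Set (Euc n)} (hP : IsCompact P) (L : Fin m → (Euc n →ᵃ[ℝ] ℝ))
    (hPL : P = ⋂ k, {x | 0 ≤ L k x}) {x e : Euc n} (hx : x ∈ P) (he : e ≠ 0) :
    ∃ s : ℝ, 0 ≤ s ∧ x + s • e ∈ P ∧ ∃ k, L k (x + s • e) = 0 ∧ (L k).linear e ≠ 0 := by
  have hcont : Continuous (fun s : ℝ => x + s • e) := by fun_prop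
  set A : Set ℝ := (fun s : ℝ => x + s • e) ⁻¹' P with hA
  have hAc : IsClosed A := hP.isClosed.preimage hcont
  have h0 : (0:ℝ) ∈ A := by simpa [hA] using hx
  obtain ⟨R, hR⟩ := hP.isBounded.exists_norm_le
  have hbdd : BddAbove A := by
    refine ⟨(R + ‖x‖) / ‖e‖, fun s hs => ?_⟩
    rw [le_div_iff₀ (norm_pos_iff.2 he)]
    have h1 := hR _ hs
    have h2 : ‖s • e‖ ≤ ‖x + s • e‖ + ‖x‖ := by
      have := norm_sub_le (x + s • e) x
      simpa using this
    rw [norm_smul] at h2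
    have h3 : s * ‖e‖ ≤ ‖s‖ * ‖e‖ := by gcongr; exact Real.le_norm_self s
    linarith
  set s := sSup A
  have hsA : s ∈ A := hAc.csSup_mem ⟨0, h0⟩ hbdd
  refine ⟨s, le_csSup hbdd h0, hsA, ?_⟩
  by_contra! hcon
  have hall : ∀ k, ∀ᶠ s' in 𝓝[>] s, 0 ≤ L k (x + s' • e) := by
    intro k
    have hk : 0 ≤ L k (x + s • e) := by
      have : x + s • e ∈ P := hsA
      rw [hPL] at this
      exact Set.mem_iInter.1 this k
    rcases hk.eq_or_lt with h | h
    · have hz := hcon k h.symm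
      refine Eventually.of_forall fun s' => ?_
      have : x + s' • e = ((s' - s) • e) +ᵥ (x + s • e) := by
        simp only [vadd_eq_add, sub_smul]; abel
      rw [this, AffineMap.map_vadd, map_smul, hz, ← h]; simp
    · have : Continuous fun s' : ℝ => L k (x + s' • e) := (affcont (L k)).comp hcont
      exact nhdsWithin_le_nhds (((this.tendsto s).eventually (lt_mem_nhds h)).mono fun _ h => le_of_lt h)
  have hall' : ∀ᶠ s' in 𝓝[>] s, s' ∈ A := by
    filter_upwards [eventually_all.2 hall] with s' hs'
    change x + s' • e ∈ P
    rw [hPL]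
    exact Set.mem_iInter.2 hs'
  obtain ⟨s', hs', hlt⟩ := (hall'.and self_mem_nhdsWithin).exists
  exact absurd (le_csSup hbdd hs') (not_le.2 hlt)

lemma lc_le_max {n : ℕ} {P : Set (Euc n)} {u : Euc n → ℝ≥0∞} (hu : LogConvexOn P u)
    {y z : Euc n} (hy : y ∈ P) (hz : z ∈ P) {t : ℝ} (h0 : 0 ≤ t) (h1 : t ≤ 1) :
    u ((1 - t) • y + t • z) ≤ max (u y) (u z) := by
  refine (hu hy hz h0 h1).trans ?_
  calc u y ^ (1 - t) * u z ^ t ≤ (max (u y) (u z)) ^ (1 - t) * (max (u y) (u z)) ^ t := by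
        gcongr
        · exact le_max_left _ _
        · exact le_max_right _ _
    _ = max (u y) (u z) := by
        rw [← ENNReal.rpow_add_of_nonneg _ _ (by linarith) h0]; simp

open Classical in
def hA {n m : ℕ} (P : Set (Euc n)) (L : Fin m → (Euc n →ᵃ[ℝ] ℝ)) (v : Euc n → ℝ≥0∞) (i : Fin n)
    (x : Euc n) : ℝ≥0∞ :=
  ∑ k, if (L k).linear (EuclideanSpace.single i 1) ≠ 0 then P.indicator v (QA (L k) i x) else 0

lemma le_hA {n m : ℕ} {P : Set (Euc n)} (hP : IsCompact P) (L : Fin m → (Euc n →ᵃ[ℝ] ℝ))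
    (hPL : P = ⋂ k, {x | 0 ≤ L k x}) {u : Euc n → ℝ≥0∞} (hu : LogConvexOn P u)
    {x : Euc n} (hx : x ∈ P) (i : Fin n) : u x ≤ hA P L u i x := by
  set e : Euc n := EuclideanSpace.single i 1 with he
  have hne : e ≠ 0 := by simp [he]
  have main : ∀ s : ℝ, x + s • e ∈ P → (∃ k, L k (x + s • e) = 0 ∧ (L k).linear e ≠ 0) →
      u (x + s • e) ≤ hA P L u i x := by
    rintro s hs ⟨k, hk0, hk⟩
    have hQ : QA (L k) i x = x + s • e := by
      rw [add_comm, ← vadd_eq_add, AffineMap.map_vadd, map_smul, smul_eq_mul, vadd_eq_add] at hk0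
      have : L k x / (L k).linear e = -s := by
        field_simp; linarith
      rw [QA, ← he, this]; simp
    unfold hA
    refine le_trans ?_ (Finset.single_le_sum (fun _ _ => zero_le) (Finset.mem_univ k))
    rw [if_pos hk, hQ, Set.indicator_of_mem hs]
  obtain ⟨s₁, h1, hs1, hk1⟩ := exit_line hP L hPL hx hne
  obtain ⟨s₂, h2, hs2, k2, hk2, hk2'⟩ := exit_line hP L hPL hx (neg_ne_zero.2 hne)
  have m1 := main s₁ hs1 hk1
  rw [smul_neg, ← neg_smul] at hs2 hk2
  have m2 := main (-s₂) hs2 ⟨k2, hk2, by simpa using hk2'⟩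
  have hb : s₁ / (s₁ + s₂) ≤ 1 := div_le_one_of_le₀ (by linarith) (by linarith)
  have := lc_le_max hu hs1 hs2 (t := s₁ / (s₁ + s₂)) (by positivity) hb
  have hx' : (1 - s₁ / (s₁ + s₂)) • (x + s₁ • e) + (s₁ / (s₁ + s₂)) • (x + -s₂ • e) = x := by
    have : (1 - s₁ / (s₁ + s₂)) * s₁ + (s₁ / (s₁ + s₂)) * (-s₂) = 0 := by
      by_cases hz : s₁ + s₂ = 0
      · have : s₁ = 0 := by linarith
        simp [this]
      · field_simp; ring
    calc _ = x + ((1 - s₁ / (s₁ + s₂)) * s₁ + (s₁ / (s₁ + s₂)) * (-s₂)) • e := by module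
      _ = x := by rw [this]; simp
  rw [hx'] at this
  exact this.trans (max_le m1 m2)

lemma QA_update {n : ℕ} (L : Euc n →ᵃ[ℝ] ℝ) (i : Fin n)
    (ha : L.linear (EuclideanSpace.single i 1) ≠ 0) (x : Euc n) (t : ℝ) :
    QA L i (x + t • EuclideanSpace.single i 1) = QA L i x := by
  unfold QA
  rw [add_comm x, ← vadd_eq_add, AffineMap.map_vadd, map_smul, smul_eq_mul, vadd_eq_add, vadd_eq_add]
  rw [add_div, mul_div_assoc, div_self ha]
  module

lemma hA_update {n m : ℕ} (P : Set (Euc n)) (L : Fin m → (Euc n →ᵃ[ℝ] ℝ)) (v : Euc n → ℝ≥0∞)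
    (i : Fin n) (x : Fin n → ℝ) (t : ℝ) :
    hA P L v i (WithLp.toLp 2 (Function.update x i t)) = hA P L v i (WithLp.toLp 2 x) := by
  have : (WithLp.toLp 2 (Function.update x i t) : Euc n) =
      WithLp.toLp 2 x + (t - x i) • EuclideanSpace.single i 1 := by
    ext j
    by_cases h : j = i
    · subst h; simp
    · simp [h]
  unfold hA
  refine Finset.sum_congr rfl fun k _ => ?_
  split_ifs with hk
  · rw [this, QA_update _ _ hk]
  · rfl

lemma hA_meas {n m : ℕ} {P : Set (Euc n)} (hP : MeasurableSet P) (L : Fin m → (Euc n →ᵃ[ℝ] ℝ))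
    {v : Euc n → ℝ≥0∞} (hv : Measurable v) (i : Fin n) : Measurable (hA P L v i) := by
  unfold hA
  refine Finset.measurable_sum _ fun k _ => ?_
  split_ifs
  · exact (hv.indicator hP).comp (QA_cont _ _).measurable
  · exact measurable_const

lemma hA_int {m M : ℕ} (S : NSystem (m+1)) (hPc : IsClosed S.P) (L : Fin M → (Euc (m+1) →ᵃ[ℝ] ℝ))
    (hPL : S.P = ⋂ k, {x | 0 ≤ L k x}) (i : Fin (m+1)) (R : ℝ) :
    ∃ C : ℝ≥0∞, C ≠ ⊤ ∧ ∀ v : Euc (m+1) → ℝ≥0∞, Measurable v →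
      ∫⁻ x in {x | ∀ j, |x j| ≤ R}, hA S.P L v i x ≤
        C * ∫⁻ x in frontier S.P, v x ∂S.σ := by
  have : ∀ k, ∃ C : ℝ≥0∞, C ≠ ⊤ ∧ ((L k).linear (EuclideanSpace.single i 1) ≠ 0 →
      ∀ v : Euc (m+1) → ℝ≥0∞, Measurable v →
      ∫⁻ x in {x | ∀ j, |x j| ≤ R}, S.P.indicator v (QA (L k) i x) ≤
        C * ∫⁻ x in frontier S.P, v x ∂S.σ) := by
    intro k
    by_cases ha : (L k).linear (EuclideanSpace.single i 1) ≠ 0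
    · obtain ⟨C, hC, h⟩ := key_push S hPc (L k) (fun y hy => by
        rw [hPL] at hy; exact Set.mem_iInter.1 hy k) i ha R
      exact ⟨C, hC, fun _ => h⟩
    · exact ⟨0, by simp, fun h => absurd h ha⟩
  choose C hC h using this
  refine ⟨∑ k, C k, by simp [hC], fun v hv => ?_⟩
  unfold hA
  rw [lintegral_finsetSum, Finset.sum_mul]
  · refine Finset.sum_le_sum fun k _ => ?_
    split_ifs with hk
    · exact h k hk v hv
    · simp
  · intro k _
    split_ifs
    · exact (hv.indicator hPc.measurableSet).comp (QA_cont _ _).measurable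
    · exact measurable_const


lemma ind_meas {n : ℕ} {P : Set (Euc n)} (hP : IsClosed P) {u : Euc n → ℝ≥0∞}
    (hu : LowerSemicontinuousOn u P) : Measurable (P.indicator u) := by
  refine measurable_of_Ioi fun a => ?_
  have : P.indicator u ⁻¹' Set.Ioi a = P ∩ u ⁻¹' Set.Ioi a := by
    ext x
    by_cases hx : x ∈ P
    · simp [hx]
    · simp [hx]
  rw [this]
  obtain ⟨v, hv, he⟩ := lowerSemicontinuousOn_iff_preimage_Ioi.1 hu a
  rw [he]
  exact hP.measurableSet.inter hv.measurableSet

lemma main_ineq {m : ℕ} (S : NSystem (m+1)) :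
    ∃ p : ℝ, 1 < p ∧ (1 ≤ m → p = ((m+1:ℕ):ℝ) / (((m+1:ℕ):ℝ) - 1)) ∧
    ∃ C : ℝ≥0∞, C ≠ ⊤ ∧ ∀ u : Euc (m+1) → ℝ≥0∞, LowerSemicontinuousOn u S.P → LogConvexOn S.P u →
      ∫⁻ x in S.P, u x ^ p ∂S.μ ≤ C * (∫⁻ x in frontier S.P, u x ∂S.σ) ^ p := by
  obtain ⟨⟨hPk, -, M, L, -, hPL⟩, -⟩ := S.simple
  have hPc := hPk.isClosed
  have hfr : frontier S.P ⊆ S.P := hPc.frontier_subset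
  obtain ⟨c, hc, hμ⟩ := S.flat
  obtain ⟨R0, hR0⟩ := hPk.isBounded.exists_norm_le
  set R := max R0 1 with hR
  have hRpos : 0 < R := by positivity
  set box : Set (Euc (m+1)) := {x | ∀ j, |x j| ≤ R} with hbox
  have hPbox : S.P ⊆ box := fun x hx j =>
    ((PiLp.norm_apply_le x j).trans (hR0 x hx)).trans (le_max_left _ _)
  have hboxm : MeasurableSet box := by
    have : box = ⋂ j, {x : Euc (m+1) | |x j| ≤ R} := by ext; simp [hbox]
    rw [this]
    exact MeasurableSet.iInter fun j => (isClosed_le (by fun_prop) continuous_const).measurableSet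
  have hred : ∀ p : ℝ, ∀ C : ℝ≥0∞, (∀ v : Euc (m+1) → ℝ≥0∞, Measurable v → LogConvexOn S.P v →
      ∫⁻ x in S.P, v x ^ p ∂S.μ ≤ C * (∫⁻ x in frontier S.P, v x ∂S.σ) ^ p) →
      ∀ u : Euc (m+1) → ℝ≥0∞, LowerSemicontinuousOn u S.P → LogConvexOn S.P u →
      ∫⁻ x in S.P, u x ^ p ∂S.μ ≤ C * (∫⁻ x in frontier S.P, u x ∂S.σ) ^ p := by
    intro p C h u hu hlc
    have hconv : Convex ℝ S.P := by
      rw [hPL]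
      exact convex_iInter fun k => (convex_Ici (0:ℝ)).affine_preimage (L k)
    have hl : LogConvexOn S.P (S.P.indicator u) := by
      intro x hx y hy t h0 h1
      have hm : (1 - t) • x + t • y ∈ S.P := hconv hx hy (by linarith) h0 (by ring)
      rw [Set.indicator_of_mem hx, Set.indicator_of_mem hy, Set.indicator_of_mem hm]
      exact hlc hx hy h0 h1
    have := h _ (ind_meas hPc hu) hl
    rw [setLIntegral_congr_fun (g := fun x => u x ^ p) hPc.measurableSet
      (fun x hx => by simp [hx]),
      setLIntegral_congr_fun (g := u) isClosed_frontier.measurableSet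
      (fun x hx => by simp [hfr hx])] at this
    exact this
  choose C hC hCI using fun i => hA_int S hPc L hPL i R
  rcases Nat.eq_zero_or_pos m with rfl | hm
  · have hvol : volume box = ENNReal.ofReal (2 * R) := by
      have := slabA (m := 0) 0 R Set.univ
      simp only [Set.mem_univ, and_true] at this
      have h2 : volume (Set.univ : Set (Fin 0 → ℝ)) = 1 := by
        rw [volume_pi, Measure.pi_of_empty]; simp
      rw [h2, mul_one] at this
      rw [← this]
      congr 1
      ext x
      simp [hbox]
    refine ⟨2, by norm_num, by simp, ((ENNReal.ofReal (2 * R))⁻¹ * C 0) ^ (2:ℝ) * S.μ S.P, ?_, ?_⟩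
    · refine ENNReal.mul_ne_top (ENNReal.rpow_ne_top_of_nonneg (by norm_num)
        (ENNReal.mul_ne_top (by simp [hRpos]) (hC 0))) ?_
      rw [hμ]
      simp only [Measure.smul_apply, smul_eq_mul]
      refine ENNReal.mul_ne_top (by simp) ?_
      rw [Measure.restrict_apply_self]
      exact hPk.measure_ne_top
    · refine hred _ _ fun v hv hlc => ?_
      have hpt : ∀ x ∈ S.P, v x ≤ ((ENNReal.ofReal (2 * R))⁻¹ * C 0) * ∫⁻ x in frontier S.P, v x ∂S.σ := by
        intro x hx
        have h1 := hCI 0 v hv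
        have h2 : ∫⁻ y in box, hA S.P L v 0 y = ENNReal.ofReal (2 * R) * hA S.P L v 0 x := by
          rw [← hvol, mul_comm, ← setLIntegral_const]
          congr 1
          ext y
          have := hA_update S.P L v 0 (WithLp.ofLp x) (y 0)
          convert this using 2
          ext j
          have : j = 0 := Subsingleton.elim (α := Fin 1) _ _
          subst this
          simp
        rw [h2] at h1
        have h3 := le_hA hPk L hPL hlc hx 0
        rw [mul_assoc, ← ENNReal.div_eq_inv_mul, ENNReal.le_div_iff_mul_le (by simp [hRpos]) (Or.inl ENNReal.ofReal_ne_top), mul_comm]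
        exact le_trans (by gcongr) h1
      calc ∫⁻ x in S.P, v x ^ (2:ℝ) ∂S.μ ≤ ∫⁻ x in S.P,
            (((ENNReal.ofReal (2 * R))⁻¹ * C 0) * ∫⁻ x in frontier S.P, v x ∂S.σ) ^ (2:ℝ) ∂S.μ := by
            refine setLIntegral_mono measurable_const fun x hx => ?_
            gcongr
            exact hpt x hx
        _ = _ := by
            rw [setLIntegral_const, ENNReal.mul_rpow_of_nonneg _ _ (by norm_num)]
            ring
  · set p : ℝ := ((m+1:ℕ):ℝ) / (((m+1:ℕ):ℝ) - 1) with hp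
    have hm' : (0:ℝ) < m := by exact_mod_cast hm
    have hn1 : (1:ℝ) < ((m+1:ℕ):ℝ) := by push_cast; linarith
    have hconj : ((Fintype.card (Fin (m+1)) : ℕ) : ℝ).HolderConjugate p := by
      rw [Fintype.card_fin]
      exact Real.HolderConjugate.conjExponent hn1
    have hp1 : 1 < p := by
      rw [hp, lt_div_iff₀ (by linarith)]; linarith
    refine ⟨p, hp1, fun _ => rfl, ENNReal.ofReal c * ((ENNReal.ofReal (2 * R))⁻¹ * ∑ i, C i) ^ p, ?_, ?_⟩
    · refine ENNReal.mul_ne_top (by simp) (ENNReal.rpow_ne_top_of_nonneg (by linarith)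
        (ENNReal.mul_ne_top (by simp [hRpos]) (by simp [hC])))
    · refine hred _ _ fun v hv hlc => ?_
      set f : (Fin (m+1) → ℝ) → ℝ≥0∞ := fun x => ∑ i, box.indicator (hA S.P L v i) (WithLp.toLp 2 x) with hf
      have htoLp : Measurable (WithLp.toLp 2 : (Fin (m+1) → ℝ) → Euc (m+1)) :=
        (PiLp.volume_preserving_toLp (Fin (m+1))).measurable
      have hfm : Measurable f := by
        refine Finset.measurable_sum _ fun i _ => ?_
        exact ((hA_meas hPc.measurableSet L hv i).indicator hboxm).comp htoLp
      have hGN := lintegral_prod_lintegral_pow_le (fun _ : Fin (m+1) => (volume : Measure ℝ)) hconj hfm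
      have hfi : ∫⁻ x, f x ∂(Measure.pi fun _ : Fin (m+1) => (volume : Measure ℝ)) ≤
          (∑ i, C i) * ∫⁻ x in frontier S.P, v x ∂S.σ := by
        rw [hf, lintegral_finsetSum, Finset.sum_mul]
        · refine Finset.sum_le_sum fun i _ => ?_
          refine le_trans (le_of_eq ?_) (hCI i v hv)
          rw [← lintegral_indicator hboxm]
          exact (PiLp.volume_preserving_toLp (Fin (m+1))).lintegral_comp
            ((hA_meas hPc.measurableSet L hv i).indicator hboxm)
        · intro i _
          exact ((hA_meas hPc.measurableSet L hv i).indicator hboxm).comp htoLp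
      have hpt : ∀ x : Fin (m+1) → ℝ, S.P.indicator (fun x => (ENNReal.ofReal (2 * R) * v x) ^ p) (WithLp.toLp 2 x) ≤
          ∏ i, (∫⁻ t : ℝ, f (Function.update x i t)) ^ (1 / ((Fintype.card (Fin (m+1)) : ℝ) - 1)) := by
        intro x
        by_cases hx : (WithLp.toLp 2 x : Euc (m+1)) ∈ S.P
        swap
        · simp [hx]
        rw [Set.indicator_of_mem hx]
        have hi : ∀ i, ENNReal.ofReal (2 * R) * v (WithLp.toLp 2 x) ≤ ∫⁻ t : ℝ, f (Function.update x i t) := by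
          intro i
          calc ENNReal.ofReal (2 * R) * v (WithLp.toLp 2 x) ≤
                ENNReal.ofReal (2 * R) * hA S.P L v i (WithLp.toLp 2 x) := by
                gcongr; exact le_hA hPk L hPL hlc hx i
            _ = ∫⁻ t in Set.Icc (-R) R, hA S.P L v i (WithLp.toLp 2 x) := by
                rw [setLIntegral_const, Real.volume_Icc, mul_comm]; congr 2; ring
            _ ≤ ∫⁻ t in Set.Icc (-R) R, f (Function.update x i t) := by
                refine setLIntegral_mono' measurableSet_Icc fun t ht => ?_
                rw [hf]
                refine le_trans ?_ (Finset.single_le_sum (fun _ _ => zero_le) (Finset.mem_univ i))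
                rw [Set.indicator_of_mem, hA_update]
                intro j
                by_cases hj : j = i
                · subst hj; simpa [abs_le] using ht
                · simpa [hj] using hPbox hx j
            _ ≤ _ := setLIntegral_le_lintegral _ _
        have h1n : 0 ≤ 1 / ((Fintype.card (Fin (m+1)) : ℝ) - 1) := by
          rw [Fintype.card_fin]; apply div_nonneg <;> linarith
        calc (ENNReal.ofReal (2 * R) * v (WithLp.toLp 2 x)) ^ p =
            ∏ i : Fin (m+1), (ENNReal.ofReal (2 * R) * v (WithLp.toLp 2 x)) ^ (1 / ((Fintype.card (Fin (m+1)) : ℝ) - 1)) := by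
              rw [Finset.prod_const, Finset.card_univ, Fintype.card_fin, ← ENNReal.rpow_natCast, ← ENNReal.rpow_mul]
              congr 1
              rw [hp]; ring
          _ ≤ _ := Finset.prod_le_prod' fun i _ => ENNReal.rpow_le_rpow (hi i) h1n
      have hfin : ENNReal.ofReal (2*R) ^ p * ∫⁻ x in S.P, v x ^ p ≤
          ((∑ i, C i) * ∫⁻ x in frontier S.P, v x ∂S.σ) ^ p := by
        refine le_trans ?_ ((lintegral_mono hpt).trans (hGN.trans (ENNReal.rpow_le_rpow hfi (by linarith))))
        rw [← lintegral_const_mul _ (hv.pow_const p)]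
        have hmm : Measurable (S.P.indicator (fun x => (ENNReal.ofReal (2 * R) * v x) ^ p)) :=
          ((hv.const_mul _).pow_const p).indicator hPc.measurableSet
        have := (PiLp.volume_preserving_toLp (Fin (m+1))).lintegral_comp hmm
        refine le_trans (le_of_eq ?_) (le_of_eq this.symm)
        rw [lintegral_indicator hPc.measurableSet]
        congr 1
        ext x
        rw [ENNReal.mul_rpow_of_nonneg _ _ (by linarith)]
      have hμint : ∫⁻ x in S.P, v x ^ p ∂S.μ = ENNReal.ofReal c * ∫⁻ x in S.P, v x ^ p := by
        rw [hμ, Measure.restrict_smul, Measure.restrict_restrict hPc.measurableSet, Set.inter_self,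
          lintegral_smul_measure, smul_eq_mul]
      rw [hμint, mul_assoc]
      gcongr
      rw [← ENNReal.mul_rpow_of_nonneg _ _ (by linarith), mul_assoc,
        ENNReal.mul_rpow_of_nonneg _ _ (by linarith), ENNReal.inv_rpow, ← ENNReal.div_eq_inv_mul,
        ENNReal.le_div_iff_mul_le (Or.inl ?_) (Or.inl ?_), mul_comm]
      · exact hfin
      · exact (ENNReal.rpow_pos (by simp [hRpos]) ENNReal.ofReal_ne_top).ne'
      · exact ENNReal.rpow_ne_top_of_nonneg (by linarith) ENNReal.ofReal_ne_top

lemma sys_conv {n : ℕ} (S : NSystem n) : Convex ℝ S.P := by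
  obtain ⟨⟨-, -, M, L, -, hPL⟩, -⟩ := S.simple
  rw [hPL]
  exact convex_iInter fun k => (convex_Ici (0:ℝ)).affine_preimage (L k)

lemma sys_compact {n : ℕ} (S : NSystem n) : IsCompact S.P := S.simple.1.1
lemma sys_int {n : ℕ} (S : NSystem n) : (interior S.P).Nonempty := S.simple.1.2.1

lemma sys_vol_ne_zero {n : ℕ} (S : NSystem n) : volume S.P ≠ 0 :=
  (Measure.measure_pos_of_nonempty_interior _ (sys_int S)).ne'

lemma sys_vol_ne_top {n : ℕ} (S : NSystem n) : volume S.P ≠ ⊤ := (sys_compact S).measure_ne_top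

lemma sys_mu {n : ℕ} (S : NSystem n) : ∃ c : ℝ, 0 < c ∧
    S.μ.restrict S.P = ENNReal.ofReal c • volume.restrict S.P ∧
    S.μ S.P = ENNReal.ofReal c * volume S.P := by
  obtain ⟨c, hc, h⟩ := S.flat
  refine ⟨c, hc, ?_, ?_⟩
  · rw [h, Measure.restrict_smul, Measure.restrict_restrict (sys_compact S).isClosed.measurableSet, Set.inter_self]
  · rw [h, Measure.smul_apply, Measure.restrict_apply_self, smul_eq_mul]

lemma sys_mu_ne_zero {n : ℕ} (S : NSystem n) : S.μ S.P ≠ 0 := by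
  obtain ⟨c, hc, -, h⟩ := sys_mu S
  rw [h]; exact mul_ne_zero (by simp [hc]) (sys_vol_ne_zero S)

lemma sys_mu_ne_top {n : ℕ} (S : NSystem n) : S.μ S.P ≠ ⊤ := by
  obtain ⟨c, hc, -, h⟩ := sys_mu S
  rw [h]; exact ENNReal.mul_ne_top ENNReal.ofReal_ne_top (sys_vol_ne_top S)

lemma sys_int_vol {n : ℕ} (S : NSystem n) {u : Euc n → ℝ≥0∞}
    (h : ∫⁻ x in S.P, u x ∂S.μ = S.μ S.P) : ∫⁻ x in S.P, u x = volume S.P := by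
  obtain ⟨c, hc, h1, h2⟩ := sys_mu S
  rw [h1, h2, lintegral_smul_measure, smul_eq_mul] at h
  exact (ENNReal.mul_right_inj (by simp [hc]) (by simp)).1 h

lemma sys_ae_int {n : ℕ} (S : NSystem n) : ∀ᵐ x ∂(S.μ.restrict S.P), x ∈ interior S.P := by
  obtain ⟨c, hc, h1, h2⟩ := sys_mu S
  rw [h1]
  refine Measure.ae_smul_measure ?_ _
  have hf : volume (frontier S.P) = 0 := (sys_conv S).addHaar_frontier volume
  have h3 : ∀ᵐ x ∂(volume.restrict S.P), x ∉ frontier S.P :=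
    ae_restrict_of_ae (measure_eq_zero_iff_ae_notMem.1 hf)
  filter_upwards [h3, ae_restrict_mem (sys_compact S).isClosed.measurableSet] with x hx hxP
  by_contra hc
  exact hx ⟨subset_closure hxP, hc⟩

lemma lc_ind {n : ℕ} {P : Set (Euc n)} (hconv : Convex ℝ P) {u : Euc n → ℝ≥0∞}
    (hlc : LogConvexOn P u) : LogConvexOn P (P.indicator u) := by
  intro x hx y hy t h0 h1
  have hm : (1 - t) • x + t • y ∈ P := hconv hx hy (by linarith) h0 (by ring)
  rw [Set.indicator_of_mem hx, Set.indicator_of_mem hy, Set.indicator_of_mem hm]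
  exact hlc hx hy h0 h1

lemma inner_bd {n : ℕ} {P : Set (Euc n)} {x : Euc n} {r : ℝ} (hr : 0 < r) (hP : MeasurableSet P)
    (hV : volume P ≠ ⊤)
    (hball : Metric.ball x (2*r) ⊆ P) : ∃ C : ℝ≥0∞, C ≠ ⊤ ∧ ∀ u : Euc n → ℝ≥0∞, Measurable u →
      LogConvexOn P u → ∫⁻ x in P, u x = volume P → ∀ y ∈ Metric.ball x r, u y ≤ C := by
  have hb0 : volume (Metric.ball (0: Euc n) r) ≠ 0 := (Metric.measure_ball_pos volume _ hr).ne'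
  have hbt : volume (Metric.ball (0: Euc n) r) ≠ ⊤ := measure_ball_lt_top.ne
  refine ⟨(volume P + volume P) / volume (Metric.ball (0: Euc n) r),
    ENNReal.div_ne_top (by simp [hV]) hb0, fun u hu hlc hI y hy => ?_⟩
  rw [ENNReal.le_div_iff_mul_le (Or.inl hb0) (Or.inl hbt)]
  set w := P.indicator u
  have hw : Measurable w := hu.indicator hP
  have hIw : ∫⁻ x, w x = volume P := by rw [lintegral_indicator hP, hI]
  calc u y * volume (Metric.ball (0: Euc n) r) = ∫⁻ v in Metric.ball (0: Euc n) r, u y := by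
        rw [setLIntegral_const]
    _ ≤ ∫⁻ v in Metric.ball (0: Euc n) r, (w (y + v) + w (y - v)) := by
        refine setLIntegral_mono' measurableSet_ball fun v hv => ?_
        have hv' : ‖v‖ < r := by simpa using hv
        have hyx : ‖y - x‖ < r := by simpa [dist_eq_norm] using hy
        have h1 : y + v ∈ P := hball (by
          rw [Metric.mem_ball, dist_eq_norm]
          have := norm_add_le (y - x) v
          rw [show y + v - x = (y - x) + v by abel]; linarith)
        have h2 : y - v ∈ P := hball (by
          rw [Metric.mem_ball, dist_eq_norm]
          have := norm_sub_le (y - x) v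
          rw [show y - v - x = (y - x) - v by abel]; linarith)
        have := lc_le_max hlc h1 h2 (t := 1/2) (by norm_num) (by norm_num)
        rw [show ((1:ℝ) - 1/2) • (y + v) + ((1:ℝ)/2) • (y - v) = y by module] at this
        simp only [w, Set.indicator_of_mem h1, Set.indicator_of_mem h2]
        exact this.trans (max_le le_self_add le_add_self)
    _ ≤ ∫⁻ v, (w (y + v) + w (y - v)) := setLIntegral_le_lintegral _ _
    _ = _ := by
        rw [lintegral_add_left (by fun_prop), lintegral_add_left_eq_self, lintegral_sub_left_eq_self, hIw]

lemma enn_lin_le {p : ℝ} (hp : 1 < p) {ε : ℝ} (hε : 0 < ε) :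
    ∃ K : ℝ≥0, ∀ y : ℝ≥0∞, y ≤ ENNReal.ofReal ε * y ^ p + K := by
  set K : ℝ := (1/ε) ^ (1/(p-1)) with hK
  have hK0 : 0 ≤ K := by positivity
  refine ⟨K.toNNReal, fun y => ?_⟩
  rcases le_total y (ENNReal.ofReal K) with h | h
  · exact h.trans (le_add_self)
  · refine le_trans ?_ le_self_add
    have h1 : ENNReal.ofReal (1/ε) ≤ y ^ (p - 1) := by
      calc ENNReal.ofReal (1/ε) = ENNReal.ofReal K ^ (p-1) := by
            rw [ENNReal.ofReal_rpow_of_nonneg hK0 (by linarith), hK, ← Real.rpow_mul (by positivity)]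
            rw [one_div_mul_cancel (by linarith), Real.rpow_one]
        _ ≤ _ := ENNReal.rpow_le_rpow h (by linarith)
    have h2 : y ^ p = y * y ^ (p-1) := by
      conv_rhs => rw [← ENNReal.rpow_one y, ← ENNReal.rpow_mul, one_mul]
      rw [← ENNReal.rpow_add_of_nonneg _ _ (by norm_num) (by linarith)]
      congr 1; ring
    calc y = y * (ENNReal.ofReal ε * ENNReal.ofReal (1/ε)) := by
          rw [← ENNReal.ofReal_mul hε.le, mul_one_div_cancel hε.ne']; simp
      _ ≤ y * (ENNReal.ofReal ε * y ^ (p-1)) := by gcongr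
      _ = _ := by rw [h2]; ring

lemma lower_bd {n : ℕ} {P : Set (Euc n)} (hPk : IsCompact P) (hconv : Convex ℝ P)
    (hV : volume P ≠ 0) {p : ℝ} (hp : 1 < p) {M : ℝ≥0∞} (hM : M ≠ ⊤) :
    ∃ a : ℝ≥0∞, a ≠ 0 ∧ a ≠ ⊤ ∧ ∀ u : Euc n → ℝ≥0∞, Measurable u → LogConvexOn P u →
      ∫⁻ x in P, u x = volume P → ∫⁻ x in P, u x ^ p ≤ M → ∀ x ∈ P, a ≤ u x := by
  have hVt : volume P ≠ ⊤ := hPk.measure_ne_top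
  set V := (volume P).toReal with hVr
  have hV0 : 0 < V := ENNReal.toReal_pos hV hVt
  have hVe : volume P = ENNReal.ofReal V := (ENNReal.ofReal_toReal hVt).symm
  set ε := (V/4) / (M.toReal + 1) with hε
  have hM0 : 0 ≤ M.toReal := ENNReal.toReal_nonneg
  have hεM : ENNReal.ofReal ε * M ≤ ENNReal.ofReal (V/4) := by
    rw [← ENNReal.ofReal_toReal hM, ← ENNReal.ofReal_mul (by positivity)]
    apply ENNReal.ofReal_le_ofReal
    rw [hε, div_mul_eq_mul_div, div_le_iff₀ (by linarith)]
    gcongr; linarith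
  obtain ⟨K, hK⟩ := enn_lin_le hp (show 0 < ε by positivity)
  obtain ⟨t, ⟨ht0, ht1⟩, ht⟩ : ∃ t : ℝ, (0 < t ∧ t < 1) ∧ K * (1 - t ^ n) ≤ 1/4 := by
    have hc : Tendsto (fun t : ℝ => (K:ℝ) * (1 - t ^ n)) (𝓝[<] 1) (𝓝 ((K:ℝ) * (1 - 1 ^ n))) := by
      apply tendsto_nhdsWithin_of_tendsto_nhds
      exact Continuous.tendsto (by fun_prop) 1
    rw [one_pow, sub_self, mul_zero] at hc
    have h1 := hc.eventually (ge_mem_nhds (show (0:ℝ) < 1/4 by norm_num))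
    have h2 : ∀ᶠ t : ℝ in 𝓝[<] 1, t ∈ Set.Ioo (0:ℝ) 1 := Ioo_mem_nhdsLT (by norm_num)
    obtain ⟨t, h, h'⟩ := (h1.and h2).exists
    exact ⟨t, h', h⟩
  have h1t : 0 < 1 - t := by linarith
  refine ⟨(4:ℝ≥0∞)⁻¹ ^ (1/(1-t)), (ENNReal.rpow_pos (by simp) (by simp)).ne',
    ENNReal.rpow_ne_top_of_nonneg (by positivity) (by simp), fun u hu hlc hI hIp x hx => ?_⟩
  set f : Euc n → Euc n := ⇑(AffineMap.homothety x t) with hf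
  have hfe : ∀ z, f z = (1 - t) • x + t • z := by
    intro z; rw [hf, AffineMap.homothety_apply]; simp only [vsub_eq_sub, vadd_eq_add]; module
  have hfP : f '' P ⊆ P := by
    rintro _ ⟨z, hz, rfl⟩
    rw [hfe]; exact hconv hx hz h1t.le ht0.le (by ring)
  have hfc : Continuous f := by
    have : f = fun z => (1 - t) • x + t • z := funext hfe
    rw [this]; fun_prop
  have hfm : MeasurableSet (f '' P) := (hPk.image hfc).isClosed.measurableSet
  have hvf : volume (f '' P) = ENNReal.ofReal (t^n) * volume P := by
    rw [hf, Measure.addHaar_image_homothety, abs_of_pos (by positivity)]; simp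
  have hvd : volume (P \ f '' P) = ENNReal.ofReal ((1 - t^n) * V) := by
    rw [measure_sdiff hfP hfm.nullMeasurableSet (measure_ne_top_of_subset hfP hVt), hvf, hVe,
      ← ENNReal.ofReal_mul (by positivity), ← ENNReal.ofReal_sub _ (by positivity)]
    congr 1; ring
  have hA : ∫⁻ z in P \ f '' P, u z ≤ ENNReal.ofReal (V/2) := by
    calc ∫⁻ z in P \ f '' P, u z ≤ ∫⁻ z in P \ f '' P, (ENNReal.ofReal ε * u z ^ p + K) :=
          lintegral_mono fun z => hK (u z)
      _ = ENNReal.ofReal ε * (∫⁻ z in P \ f '' P, u z ^ p) + K * volume (P \ f '' P) := by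
          rw [lintegral_add_right _ measurable_const, lintegral_const_mul _ (hu.pow_const p), setLIntegral_const]
      _ ≤ ENNReal.ofReal ε * M + ENNReal.ofReal (V/4) := by
          gcongr
          · exact (lintegral_mono_set Set.sdiff_subset).trans hIp
          · rw [hvd, ← ENNReal.ofReal_coe_nnreal, ← ENNReal.ofReal_mul (by positivity)]
            apply ENNReal.ofReal_le_ofReal
            nlinarith
      _ ≤ ENNReal.ofReal (V/4) + ENNReal.ofReal (V/4) := by gcongr
      _ = _ := by rw [← ENNReal.ofReal_add (by positivity) (by positivity)]; congr 1; ring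
  have hB : ∫⁻ z in f '' P, u z ≤ u x ^ (1 - t) * ENNReal.ofReal (2 * V) := by
    have hder : ∀ z ∈ P, HasFDerivWithinAt f (t • ContinuousLinearMap.id ℝ (Euc n)) P z := by
      intro z _
      have : f = fun z => (1 - t) • x + t • z := funext hfe
      rw [this]
      exact (((hasFDerivAt_id z).const_smul t).const_add _).hasFDerivWithinAt
    have hinj : Set.InjOn f P := by
      intro a _ b _ hab
      rw [hfe, hfe] at hab
      exact smul_right_injective _ ht0.ne' (add_left_cancel hab)
    rw [lintegral_image_eq_lintegral_abs_det_fderiv_mul volume hPk.isClosed.measurableSet hder hinj]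
    have hdet : |(t • ContinuousLinearMap.id ℝ (Euc n)).det| ≤ 1 := by
      have : (t • ContinuousLinearMap.id ℝ (Euc n)).det = t ^ n := by
        rw [ContinuousLinearMap.det, ContinuousLinearMap.toLinearMap_smul, LinearMap.det_smul]
        simp
      rw [this, abs_of_pos (by positivity)]
      exact pow_le_one₀ ht0.le ht1.le
    calc _ ≤ ∫⁻ z in P, u x ^ (1 - t) * (1 + u z) := by
          refine setLIntegral_mono' hPk.isClosed.measurableSet fun z hz => ?_
          calc _ ≤ 1 * u (f z) := by
                gcongr; rw [← ENNReal.ofReal_one]; exact ENNReal.ofReal_le_ofReal hdet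
            _ ≤ u x ^ (1 - t) * u z ^ t := by rw [one_mul, hfe]; exact hlc hx hz ht0.le ht1.le
            _ ≤ _ := by
                gcongr
                rcases le_total (u z) 1 with h | h
                · exact (ENNReal.rpow_le_one h ht0.le).trans le_self_add
                · refine le_trans ?_ le_add_self
                  calc u z ^ t ≤ u z ^ (1:ℝ) := ENNReal.rpow_le_rpow_of_exponent_le h ht1.le
                    _ = u z := ENNReal.rpow_one _
      _ = _ := by
          rw [lintegral_const_mul _ (by fun_prop), lintegral_add_right _ hu, hI]
          simp only [lintegral_const, one_mul, Measure.restrict_apply_univ]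
          rw [hVe, ← ENNReal.ofReal_add hV0.le hV0.le, two_mul]
  have hsum : ENNReal.ofReal (V/2) + ENNReal.ofReal (V/2) ≤ u x ^ (1 - t) * ENNReal.ofReal (2 * V) + ENNReal.ofReal (V/2) := by
    calc _ = ∫⁻ z in P, u z := by
          rw [hI, hVe, ← ENNReal.ofReal_add (by positivity) (by positivity)]; congr 1; ring
      _ = ∫⁻ z in (f '' P) ∪ (P \ f '' P), u z := by rw [Set.union_sdiff_cancel hfP]
      _ ≤ _ := lintegral_union_le _ _ _
      _ ≤ _ := by gcongr
  have h4 : (4:ℝ≥0∞)⁻¹ ≤ u x ^ (1-t) := by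
    have := (ENNReal.add_le_add_iff_right ENNReal.ofReal_ne_top).1 hsum
    have h5 : (4:ℝ≥0∞)⁻¹ * ENNReal.ofReal (2 * V) ≤ u x ^ (1-t) * ENNReal.ofReal (2 * V) := by
      refine le_trans (le_of_eq ?_) this
      rw [show (4:ℝ≥0∞)⁻¹ = ENNReal.ofReal (1/4) by
        rw [one_div, ENNReal.ofReal_inv_of_pos (by norm_num)]; norm_num,
        ← ENNReal.ofReal_mul (by norm_num)]
      congr 1; ring
    exact (ENNReal.mul_le_mul_iff_left (by simp [hV0]) ENNReal.ofReal_ne_top).1 h5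
  calc (4:ℝ≥0∞)⁻¹ ^ (1/(1-t)) ≤ (u x ^ (1-t)) ^ (1/(1-t)) := ENNReal.rpow_le_rpow h4 (by positivity)
    _ = u x := by rw [← ENNReal.rpow_mul, mul_one_div_cancel h1t.ne', ENNReal.rpow_one]

def lgE (y : ℝ≥0∞) : ℝ := Real.log y.toReal

lemma exp_lgE {y : ℝ≥0∞} (h0 : y ≠ 0) (ht : y ≠ ⊤) : ENNReal.ofReal (Real.exp (lgE y)) = y := by
  rw [lgE, Real.exp_log (ENNReal.toReal_pos h0 ht), ENNReal.ofReal_toReal ht]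

lemma exp_combo (a b s : ℝ) (hs : 0 ≤ s) (hs1 : s ≤ 1) :
    ENNReal.ofReal (Real.exp ((1 - s) * a + s * b)) =
    ENNReal.ofReal (Real.exp a) ^ (1 - s) * ENNReal.ofReal (Real.exp b) ^ s := by
  rw [ENNReal.ofReal_rpow_of_pos (Real.exp_pos _), ENNReal.ofReal_rpow_of_pos (Real.exp_pos _),
    ← ENNReal.ofReal_mul (by positivity), ← Real.exp_mul, ← Real.exp_mul, ← Real.exp_add]
  congr 2; ring

lemma lc_real {n : ℕ} {P : Set (Euc n)} {u : Euc n → ℝ≥0∞} (hu : LogConvexOn P u)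
    {x y : Euc n} (hx : x ∈ P) (hy : y ∈ P) {t : ℝ} (h0 : 0 ≤ t) (h1 : t ≤ 1)
    (hx0 : u x ≠ 0) (hxt : u x ≠ ⊤) (hy0 : u y ≠ 0) (hyt : u y ≠ ⊤)
    (hz : u ((1 - t) • x + t • y) ≠ 0) :
    lgE (u ((1 - t) • x + t • y)) ≤ (1 - t) * lgE (u x) + t * lgE (u y) := by
  have h := hu hx hy h0 h1
  rw [← exp_lgE hx0 hxt, ← exp_lgE hy0 hyt, ← exp_combo _ _ _ h0 h1] at h
  have hzt : u ((1 - t) • x + t • y) ≠ ⊤ := ne_top_of_le_ne_top ENNReal.ofReal_ne_top h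
  rw [← exp_lgE hz hzt, ENNReal.ofReal_le_ofReal_iff (Real.exp_pos _).le, Real.exp_le_exp] at h
  exact h

lemma lgE_tendsto {ι : Type*} {l : Filter ι} {g : ι → ℝ≥0∞} {a : ℝ≥0∞} (h : Tendsto g l (𝓝 a))
    (h0 : a ≠ 0) (ht : a ≠ ⊤) : Tendsto (fun i => lgE (g i)) l (𝓝 (lgE a)) :=
  ((ENNReal.tendsto_toReal ht).comp h).log (ENNReal.toReal_pos h0 ht).ne'

lemma compactness {n : ℕ} {P : Set (Euc n)} (hconv : Convex ℝ P)
    (hint : (interior P).Nonempty) (v : ℕ → Euc n → ℝ≥0∞) (hlc : ∀ k, LogConvexOn P (v k))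
    (hup : ∀ x ∈ interior P, ∃ r > 0, ∃ C : ℝ≥0∞, C ≠ ⊤ ∧ Metric.ball x r ⊆ interior P ∧
      ∀ k, ∀ y ∈ Metric.ball x r, v k y ≤ C)
    {a : ℝ≥0∞} (ha : a ≠ 0) (hat : a ≠ ⊤) (hlow : ∀ k, ∀ x ∈ P, a ≤ v k x) :
    ∃ φ : ℕ → ℕ, StrictMono φ ∧ ∃ u : Euc n → ℝ≥0∞, LowerSemicontinuousOn u P ∧ (∀ x ∈ P, 0 < u x) ∧
      LogConvexOn P u ∧ (∀ x ∈ interior P, u x ≠ ⊤ ∧ Tendsto (fun k => v (φ k) x) atTop (𝓝 (u x))) ∧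
      ∀ x ∈ P, u x ≤ liminf (fun k => v (φ k) x) atTop := by
  have hIP : interior P ⊆ P := interior_subset
  have hv0 : ∀ k, ∀ x ∈ P, v k x ≠ 0 := fun k x hx h => ha (le_zero_iff.1 (h ▸ hlow k x hx))
  have hvt : ∀ k, ∀ x ∈ interior P, v k x ≠ ⊤ := by
    intro k x hx
    obtain ⟨r, hr, C, hC, -, h⟩ := hup x hx
    exact ne_top_of_le_ne_top hC (h k x (Metric.mem_ball_self hr))
  have hcf : ∀ k, ConvexOn ℝ (interior P) (fun x => lgE (v k x)) := by
    intro k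
    refine ⟨hconv.interior, fun x hx y hy s t hs ht hst => ?_⟩
    obtain rfl : s = 1 - t := by linarith
    have hz : (1 - t) • x + t • y ∈ interior P := hconv.interior hx hy hs ht hst
    exact lc_real (hlc k) (hIP hx) (hIP hy) ht (by linarith) (hv0 k x (hIP hx)) (hvt k x hx)
      (hv0 k y (hIP hy)) (hvt k y hy) (hv0 k _ (hIP hz))
  -- equi-Lipschitz
  have hLip : ∀ x ∈ interior P, ∃ r > 0, ∃ K : ℝ≥0, Metric.ball x r ⊆ interior P ∧
      ∀ k, LipschitzOnWith K (fun x => lgE (v k x)) (Metric.ball x r) := by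
    intro x hx
    obtain ⟨r, hr, C, hC, hsub, h⟩ := hup x hx
    set Mb := max (lgE C) (-(lgE a)) with hMb
    refine ⟨r/2, by positivity, (2 * Mb / (r/2)).toNNReal,
      (Metric.ball_subset_ball (by linarith)).trans hsub, fun k => ?_⟩
    have := ((hcf k).subset hsub (convex_ball x r)).lipschitzOnWith_of_abs_le (ε := r/2) (M := Mb)
      (by positivity) ?_
    · rwa [show r - r/2 = r/2 by ring] at this
    · intro y hy
      have hyP := hsub hy
      have ht := hvt k y hyP
      have h1 := hlow k y (hIP hyP)
      have h2 := h k y hy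
      have p1 : 0 < a.toReal := ENNReal.toReal_pos ha hat
      have p2 : 0 < (v k y).toReal := ENNReal.toReal_pos (hv0 k y (hIP hyP)) ht
      have q1 : lgE a ≤ lgE (v k y) := Real.log_le_log p1 (ENNReal.toReal_mono ht h1)
      have q2 : lgE (v k y) ≤ lgE C := Real.log_le_log p2 (ENNReal.toReal_mono hC h2)
      rw [abs_le]
      constructor
      · have := le_max_right (lgE C) (-(lgE a)); linarith
      · exact q2.trans (le_max_left _ _)
  -- subsequence
  let d := TopologicalSpace.denseSeq (Euc n)
  have hd : DenseRange d := TopologicalSpace.denseRange_denseSeq _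
  obtain ⟨A, φ, hφ, hA⟩ := CompactSpace.tendsto_subseq (fun k => fun j => v k (d j))
  rw [tendsto_pi_nhds] at hA
  have hconvd : ∀ j, d j ∈ interior P → Tendsto (fun k => lgE (v (φ k) (d j))) atTop (𝓝 (lgE (A j))) := by
    intro j hj
    have h1 : a ≤ A j := ge_of_tendsto' (hA j) fun k => hlow _ _ (hIP hj)
    obtain ⟨r, hr, C, hC, -, h⟩ := hup _ hj
    have h2 : A j ≤ C := le_of_tendsto' (hA j) fun k => h _ _ (Metric.mem_ball_self hr)
    exact lgE_tendsto (hA j) (fun h => ha (le_zero_iff.1 (h ▸ h1))) (ne_top_of_le_ne_top hC h2)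
  have hF : ∀ x, ∃ y : ℝ, x ∈ interior P → Tendsto (fun k => lgE (v (φ k) x)) atTop (𝓝 y) := by
    intro x
    by_cases hx : x ∈ interior P
    swap
    · exact ⟨0, fun h => absurd h hx⟩
    obtain ⟨r, hr, K, hsub, hK⟩ := hLip x hx
    have hcau : CauchySeq (fun k => lgE (v (φ k) x)) := by
      rw [Metric.cauchySeq_iff']
      intro ε hε
      obtain ⟨j, hj⟩ := hd.exists_dist_lt x (show 0 < min r (ε / (4 * (K + 1))) by positivity)
      have hjr : d j ∈ Metric.ball x r := by
        rw [Metric.mem_ball, dist_comm]; exact lt_of_lt_of_le hj (min_le_left _ _)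
      have hb : ∀ k, dist (lgE (v (φ k) x)) (lgE (v (φ k) (d j))) ≤ ε/4 := by
        intro k
        have h1 := (hK (φ k)).dist_le_mul x (Metric.mem_ball_self hr) (d j) hjr
        have h2 : dist x (d j) ≤ ε / (4 * (K + 1)) := (lt_of_lt_of_le hj (min_le_right _ _)).le
        refine h1.trans ?_
        calc (K:ℝ) * dist x (d j) ≤ (K + 1) * (ε / (4 * (K + 1))) := by gcongr; linarith
          _ = ε/4 := by field_simp
      obtain ⟨N, hN⟩ := Metric.cauchySeq_iff'.1 (hconvd j (hsub hjr)).cauchySeq (ε/4) (by positivity)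
      refine ⟨N, fun k hk => ?_⟩
      have t1 := hb k
      have t2 := hb N
      have t3 := hN k hk
      rw [dist_comm] at t2
      have t4 := dist_triangle4 (lgE (v (φ k) x)) (lgE (v (φ k) (d j))) (lgE (v (φ N) (d j))) (lgE (v (φ N) x))
      linarith
    obtain ⟨y, hy⟩ := cauchySeq_tendsto_of_complete hcau
    exact ⟨y, fun _ => hy⟩
  choose F hF using hF
  have hFc : ConvexOn ℝ (interior P) F := by
    refine ⟨hconv.interior, fun x hx y hy s t hs ht hst => ?_⟩
    have hz := hconv.interior hx hy hs ht hst
    exact le_of_tendsto_of_tendsto' (hF _ hz) (((hF x hx).const_smul s).add ((hF y hy).const_smul t))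
      fun k => (hcf (φ k)).2 hx hy hs ht hst
  have hFcont : ∀ x ∈ interior P, ContinuousAt F x := by
    intro x hx
    obtain ⟨r, hr, K, hsub, hK⟩ := hLip x hx
    have : LipschitzOnWith K F (Metric.ball x r) := by
      refine LipschitzOnWith.of_dist_le_mul fun y hy z hz => ?_
      exact le_of_tendsto' ((hF y (hsub hy)).dist (hF z (hsub hz)))
        fun k => (hK (φ k)).dist_le_mul y hy z hz
    exact this.continuousOn.continuousAt (Metric.ball_mem_nhds x hr)
  obtain ⟨x0, hx0⟩ := hint
  have hseg : ∀ t : Set.Ioo (0:ℝ) 1, ∀ x ∈ P, (1 - t.1) • x + t.1 • x0 ∈ interior P := by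
    intro t x hx
    exact hconv.combo_self_interior_mem_interior hx hx0 (by linarith [t.2.2]) t.2.1 (by ring)
  let g : Set.Ioo (0:ℝ) 1 → Euc n → ℝ := fun t x => (F ((1 - t.1) • x + t.1 • x0) - t.1 * F x0) / (1 - t.1)
  let u : Euc n → ℝ≥0∞ := fun x => ⨆ t, ENNReal.ofReal (Real.exp (g t x))
  have hu_int : ∀ x ∈ interior P, u x = ENNReal.ofReal (Real.exp (F x)) := by
    intro x hx
    apply le_antisymm
    · refine iSup_le fun t => ENNReal.ofReal_le_ofReal (Real.exp_le_exp.2 ?_)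
      have h1t : 0 < 1 - t.1 := by linarith [t.2.2]
      have := hFc.2 hx hx0 h1t.le t.2.1.le (by ring)
      simp only [smul_eq_mul] at this
      simp only [g]
      rw [div_le_iff₀ h1t]; linarith
    · have hg : Tendsto (fun t : ℝ => ENNReal.ofReal (Real.exp ((F ((1 - t) • x + t • x0) - t * F x0) / (1 - t))))
          (𝓝[>] 0) (𝓝 (ENNReal.ofReal (Real.exp (F x)))) := by
        apply tendsto_nhdsWithin_of_tendsto_nhds
        have hc1 : ContinuousAt (fun t : ℝ => (1 - t) • x + t • x0) 0 := by
          apply Continuous.continuousAt; fun_prop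
        have hc2 : ContinuousAt (fun t : ℝ => F ((1 - t) • x + t • x0)) 0 :=
          ContinuousAt.comp (g := F) (by simpa using hFcont x hx) hc1
        have hc3 : ContinuousAt (fun t : ℝ => ENNReal.ofReal (Real.exp ((F ((1 - t) • x + t • x0) - t * F x0) / (1 - t)))) 0 := by
          refine ENNReal.continuous_ofReal.continuousAt.comp (Real.continuous_exp.continuousAt.comp ?_)
          exact (hc2.sub (by fun_prop)).div (by fun_prop) (by norm_num)
        simpa [ContinuousAt] using hc3
      refine le_of_tendsto hg ?_
      filter_upwards [Ioo_mem_nhdsGT (show (0:ℝ) < 1 by norm_num)] with t ht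
      exact le_iSup (fun t => ENNReal.ofReal (Real.exp (g t x))) ⟨t, ht⟩
  refine ⟨φ, hφ, u, ?_, ?_, ?_, ?_, ?_⟩
  · refine lowerSemicontinuousOn_iSup fun t => ContinuousOn.lowerSemicontinuousOn ?_
    refine ENNReal.continuous_ofReal.comp_continuousOn (Real.continuous_exp.comp_continuousOn ?_)
    refine ContinuousOn.div_const (ContinuousOn.sub ?_ continuousOn_const) _
    intro x hx
    have hc1 : ContinuousAt (fun x : Euc n => (1 - t.1) • x + t.1 • x0) x := by
      apply Continuous.continuousAt; fun_prop
    exact (ContinuousAt.comp (g := F) (f := fun x : Euc n => (1 - t.1) • x + t.1 • x0) (hFcont _ (hseg t x hx)) hc1).continuousWithinAt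
  · intro x hx
    refine lt_of_lt_of_le ?_ (le_iSup (fun t => ENNReal.ofReal (Real.exp (g t x))) ⟨1/2, by norm_num, by norm_num⟩)
    simp [Real.exp_pos]
  · intro x hx y hy s hs hs1
    refine iSup_le fun t => ?_
    have h1t : 0 < 1 - t.1 := by linarith [t.2.2]
    have hg : g t ((1 - s) • x + s • y) ≤ (1 - s) * g t x + s * g t y := by
      have := hFc.2 (hseg t x hx) (hseg t y hy) (show 0 ≤ 1 - s by linarith) hs (by ring)
      rw [show (1 - s) • ((1 - t.1) • x + t.1 • x0) + s • ((1 - t.1) • y + t.1 • x0) =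
        (1 - t.1) • ((1 - s) • x + s • y) + t.1 • x0 by module] at this
      simp only [smul_eq_mul] at this
      simp only [g]
      rw [← mul_div_assoc, ← mul_div_assoc, ← add_div]
      gcongr
      linarith
    calc ENNReal.ofReal (Real.exp (g t ((1 - s) • x + s • y))) ≤
          ENNReal.ofReal (Real.exp ((1 - s) * g t x + s * g t y)) :=
          ENNReal.ofReal_le_ofReal (Real.exp_le_exp.2 hg)
      _ = _ := exp_combo _ _ _ hs hs1
      _ ≤ u x ^ (1 - s) * u y ^ s := by
          gcongr
          · exact le_iSup (fun t => ENNReal.ofReal (Real.exp (g t x))) t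
          · exact le_iSup (fun t => ENNReal.ofReal (Real.exp (g t y))) t
  · intro x hx
    rw [hu_int x hx]
    refine ⟨ENNReal.ofReal_ne_top, ?_⟩
    have : Tendsto (fun k => ENNReal.ofReal (Real.exp (lgE (v (φ k) x)))) atTop
        (𝓝 (ENNReal.ofReal (Real.exp (F x)))) :=
      ENNReal.tendsto_ofReal ((Real.continuous_exp.tendsto _).comp (hF x hx))
    refine this.congr fun k => exp_lgE (hv0 _ x (hIP hx)) (hvt _ x hx)
  · intro x hx
    refine iSup_le fun t => ?_
    have h1t : 0 < 1 - t.1 := by linarith [t.2.2]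
    have hlim : Tendsto (fun k => ENNReal.ofReal (Real.exp
        ((lgE (v (φ k) ((1 - t.1) • x + t.1 • x0)) - t.1 * lgE (v (φ k) x0)) / (1 - t.1)))) atTop
        (𝓝 (ENNReal.ofReal (Real.exp (g t x)))) :=
      ENNReal.tendsto_ofReal ((Real.continuous_exp.tendsto _).comp
        (((hF _ (hseg t x hx)).sub ((hF x0 hx0).const_mul _)).div_const _))
    rw [← hlim.liminf_eq]
    refine liminf_le_liminf (Eventually.of_forall fun k => ?_)
    by_cases htop : v (φ k) x = ⊤
    · simp only [htop]; exact le_top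
    · have := lc_real (hlc (φ k)) hx (hIP hx0) t.2.1.le t.2.2.le (hv0 _ x hx) htop
        (hv0 _ x0 (hIP hx0)) (hvt _ x0 hx0) (hv0 _ _ (hIP (hseg t x hx)))
      conv_rhs => rw [← exp_lgE (hv0 _ x hx) htop]
      refine ENNReal.ofReal_le_ofReal (Real.exp_le_exp.2 ?_)
      rw [div_le_iff₀ h1t]; linarith

lemma enorm_phi {φ : ℝ → ℝ} {p ε C y : ℝ} (hp : 1 < p) (hε : 0 < ε) (hC : 0 ≤ C) (hy : 0 ≤ y)
    (h : |φ y| ≤ ε * y ^ p + C) :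
    ‖φ y‖ₑ ≤ ENNReal.ofReal ε * ENNReal.ofReal y ^ p + ENNReal.ofReal C := by
  rw [← ofReal_norm, Real.norm_eq_abs, ENNReal.ofReal_rpow_of_nonneg hy (by linarith),
    ← ENNReal.ofReal_mul hε.le, ← ENNReal.ofReal_add (by positivity) hC]
  exact ENNReal.ofReal_le_ofReal h

lemma int_phi {α : Type*} [MeasurableSpace α] {m : Measure α} [IsFiniteMeasure m]
    {g : α → ℝ} (hg : AEMeasurable g m) (hpos : ∀ x, 0 ≤ g x) {p : ℝ} (hp : 1 < p)
    (hb : ∫⁻ x, ENNReal.ofReal (g x) ^ p ∂m ≠ ⊤) {φ : ℝ → ℝ} (hc : Continuous φ)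
    {C : ℝ} (hC : 0 ≤ C) (hφ : ∀ y, 0 ≤ y → |φ y| ≤ 1 * y ^ p + C) :
    Integrable (fun x => φ (g x)) m := by
  refine ⟨(hc.measurable.comp_aemeasurable hg).aestronglyMeasurable, ?_⟩
  calc ∫⁻ x, ‖φ (g x)‖ₑ ∂m ≤ ∫⁻ x, (ENNReal.ofReal 1 * ENNReal.ofReal (g x) ^ p + ENNReal.ofReal C) ∂m :=
        lintegral_mono fun x => enorm_phi hp one_pos hC (hpos x) (hφ _ (hpos x))
    _ = ∫⁻ x, ENNReal.ofReal (g x) ^ p ∂m + ENNReal.ofReal C * m Set.univ := by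
        rw [lintegral_add_right _ measurable_const]; simp
    _ < ⊤ := by
        refine ENNReal.add_lt_top.2 ⟨hb.lt_top, ENNReal.mul_lt_top ENNReal.ofReal_lt_top (measure_lt_top _ _)⟩

lemma conv_int {α : Type*} [MeasurableSpace α] {m : Measure α} [IsFiniteMeasure m]
    {g : ℕ → α → ℝ} {g0 : α → ℝ} (hg : ∀ k, AEMeasurable (g k) m) (hpos : ∀ k x, 0 ≤ g k x)
    (hg0 : AEMeasurable g0 m) (hpos0 : ∀ x, 0 ≤ g0 x)
    (hlim : ∀ᵐ x ∂m, Tendsto (fun k => g k x) atTop (𝓝 (g0 x))) {p : ℝ} (hp : 1 < p)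
    {M : ℝ≥0∞} (hM : M ≠ ⊤) (hb : ∀ k, ∫⁻ x, ENNReal.ofReal (g k x) ^ p ∂m ≤ M)
    (hb0 : ∫⁻ x, ENNReal.ofReal (g0 x) ^ p ∂m ≤ M)
    {φ : ℝ → ℝ} (hc : Continuous φ)
    (hφ : ∀ ε > 0, ∃ C : ℝ, 0 ≤ C ∧ ∀ y, 0 ≤ y → |φ y| ≤ ε * y ^ p + C) :
    Tendsto (fun k => ∫ x, φ (g k x) ∂m) atTop (𝓝 (∫ x, φ (g0 x) ∂m)) := by
  obtain ⟨C1, hC1, h1⟩ := hφ 1 one_pos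
  have hi0 := int_phi hg0 hpos0 hp (ne_top_of_le_ne_top hM hb0) hc hC1 h1
  have hi := fun k => int_phi (hg k) (hpos k) hp (ne_top_of_le_ne_top hM (hb k)) hc hC1 h1
  refine tendsto_integral_of_L1' _ hi0.aestronglyMeasurable (Eventually.of_forall hi) ?_
  refine tendsto_Lp_finite_of_tendsto_ae le_rfl ENNReal.one_ne_top
    (fun k => (hi k).aestronglyMeasurable) (memLp_one_iff_integrable.2 hi0) ?_ ?_
  · intro ε hε
    have hM0 : 0 ≤ M.toReal := ENNReal.toReal_nonneg
    obtain ⟨C, hC, h⟩ := hφ (ε / (2 * (M.toReal + 1))) (by positivity)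
    refine ⟨ε / (2 * (C + 1)), by positivity, fun k s hs hms => ?_⟩
    rw [eLpNorm_one_eq_lintegral_enorm]
    simp only [enorm_indicator_eq_indicator_enorm]
    rw [lintegral_indicator hs]
    calc ∫⁻ x in s, ‖φ (g k x)‖ₑ ∂m ≤ ∫⁻ x in s, (ENNReal.ofReal (ε / (2 * (M.toReal + 1))) * ENNReal.ofReal (g k x) ^ p + ENNReal.ofReal C) ∂m :=
          lintegral_mono fun x => enorm_phi hp (by positivity) hC (hpos k x) (h _ (hpos k x))
      _ = ENNReal.ofReal (ε / (2 * (M.toReal + 1))) * ∫⁻ x in s, ENNReal.ofReal (g k x) ^ p ∂m + ENNReal.ofReal C * m s := by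
          rw [lintegral_add_right _ measurable_const, lintegral_const_mul' _ _ ENNReal.ofReal_ne_top]; simp
      _ ≤ ENNReal.ofReal (ε / (2 * (M.toReal + 1))) * ENNReal.ofReal M.toReal + ENNReal.ofReal C * ENNReal.ofReal (ε / (2 * (C + 1))) := by
          gcongr
          rw [ENNReal.ofReal_toReal hM]
          exact (setLIntegral_le_lintegral _ _).trans (hb k)
      _ ≤ ENNReal.ofReal ε := by
          rw [← ENNReal.ofReal_mul (by positivity), ← ENNReal.ofReal_mul hC, ← ENNReal.ofReal_add (by positivity) (by positivity)]
          apply ENNReal.ofReal_le_ofReal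
          have e1 : ε / (2 * (M.toReal + 1)) * M.toReal ≤ ε / 2 := by
            rw [div_mul_eq_mul_div, div_le_div_iff₀ (by positivity) (by positivity)]; nlinarith
          have e2 : C * (ε / (2 * (C + 1))) ≤ ε / 2 := by
            rw [← mul_div_assoc, div_le_div_iff₀ (by positivity) (by positivity)]; nlinarith
          linarith
  · filter_upwards [hlim] with x hx using (hc.tendsto _).comp hx

lemma abs_xlogx_le {p : ℝ} (hp : 1 < p) : ∀ ε > (0:ℝ), ∃ C : ℝ, 0 ≤ C ∧ ∀ y : ℝ, 0 ≤ y → |y * Real.log y| ≤ ε * y ^ p + C := by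
  intro ε hε
  -- y log y ≤ (s y^p - y - y log s)/(p-1), with y bounded by power
  obtain ⟨K2, hK2⟩ := enn_lin_le hp (show (0:ℝ) < ε * (p-1) / 2 / (|Real.log (ε * (p-1) / 2)| + 1) by
    have : 0 < p - 1 := by linarith
    positivity)
  have hp1 : 0 < p - 1 := by linarith
  set s := ε * (p-1) / 2 with hs
  have hs0 : 0 < s := by positivity
  have key2 : ∀ y : ℝ, 0 ≤ y → y ≤ s / (|Real.log s| + 1) * y ^ p + K2 := by
    intro y hy
    have := hK2 (ENNReal.ofReal y)
    rw [ENNReal.ofReal_rpow_of_nonneg hy (by linarith), ← ENNReal.ofReal_mul (by positivity), ← ENNReal.ofReal_coe_nnreal (p := K2),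
      ← ENNReal.ofReal_add (by positivity) K2.coe_nonneg] at this
    exact (ENNReal.ofReal_le_ofReal_iff (by positivity)).1 this
  refine ⟨1 + (|Real.log s| + 1) * K2 / (p-1), by positivity, fun y hy => ?_⟩
  rcases hy.eq_or_lt with rfl | hy0
  · simp [Real.zero_rpow (show p ≠ 0 by linarith)]; positivity
  rw [abs_le]
  constructor
  · have := Real.one_sub_inv_le_log_of_pos hy0
    have h2 : y - 1 ≤ y * Real.log y := by
      calc y - 1 = y * (1 - y⁻¹) := by field_simp
        _ ≤ _ := by gcongr
    have : 0 ≤ ε * y ^ p := by positivity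
    have : 0 ≤ (|Real.log s| + 1) * K2 / (p-1) := by positivity
    linarith
  · have h1 := Real.log_le_sub_one_of_pos (show 0 < s * y ^ (p-1) by positivity)
    rw [Real.log_mul hs0.ne' (by positivity), Real.log_rpow hy0] at h1
    have h2 := mul_le_mul_of_nonneg_left h1 hy
    have h3 : y * y ^ (p-1) = y ^ p := by
      rw [mul_comm, ← Real.rpow_add_one hy0.ne']; simp
    have h4 : - (y * Real.log s) ≤ s * y ^ p + (|Real.log s| + 1) * K2 := by
      calc - (y * Real.log s) ≤ y * (|Real.log s| + 1) := by nlinarith [neg_abs_le (Real.log s)]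
        _ ≤ (s / (|Real.log s| + 1) * y ^ p + K2) * (|Real.log s| + 1) := by gcongr; exact key2 y hy
        _ = _ := by field_simp
    have h5 : (p-1) * (y * Real.log y) ≤ 2 * s * y^p + (|Real.log s| + 1) * K2 := by nlinarith
    have h6 : ε * y ^ p + (1 + (|Real.log s| + 1) * K2 / (p - 1)) = (2 * s * y^p + (|Real.log s| + 1) * K2) / (p-1) + 1 := by
      rw [hs]; field_simp; ring
    rw [h6]
    have : y * Real.log y ≤ (2 * s * y^p + (|Real.log s| + 1) * K2) / (p-1) := by
      rw [le_div_iff₀ hp1]; linarith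
    linarith

lemma abs_id_le {p : ℝ} (hp : 1 < p) : ∀ ε > (0:ℝ), ∃ C : ℝ, 0 ≤ C ∧ ∀ y : ℝ, 0 ≤ y → |y| ≤ ε * y ^ p + C := by
  intro ε hε
  obtain ⟨K, hK⟩ := enn_lin_le hp hε
  refine ⟨K, K.2, fun y hy => ?_⟩
  have := hK (ENNReal.ofReal y)
  rw [ENNReal.ofReal_rpow_of_nonneg hy (by linarith), ← ENNReal.ofReal_mul (by positivity), ← ENNReal.ofReal_coe_nnreal (p := K),
      ← ENNReal.ofReal_add (by positivity) K.coe_nonneg] at this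
  rw [abs_of_nonneg hy]
  exact (ENNReal.ofReal_le_ofReal_iff (by positivity)).1 this


def bE {n : ℕ} (S : NSystem n) (u : Euc n → ℝ≥0∞) : ℝ≥0∞ := ∫⁻ x in frontier S.P, u x ∂S.σ
def enE {n : ℕ} (S : NSystem n) (u : Euc n → ℝ≥0∞) : ℝ := ∫ x in S.P, xlogx (u x) ∂S.μ

lemma sys_aem {n : ℕ} (S : NSystem n) {u : Euc n → ℝ≥0∞} (hu : LowerSemicontinuousOn u S.P)
    (ν : Measure (Euc n)) : AEMeasurable u (ν.restrict S.P) :=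
  (aemeasurable_indicator_iff (sys_compact S).measurableSet).1
    (ind_meas (sys_compact S).isClosed hu).aemeasurable

lemma sys_fin {n : ℕ} (S : NSystem n) : IsFiniteMeasure (S.μ.restrict S.P) :=
  ⟨by rw [Measure.restrict_apply_univ]; exact (sys_mu_ne_top S).lt_top⟩

lemma pow_le' {n : ℕ} (ν : Measure (Euc n)) (u : Euc n → ℝ≥0∞) {p : ℝ} (hp : 0 ≤ p) :
    ∫⁻ x, ENNReal.ofReal (u x).toReal ^ p ∂ν ≤ ∫⁻ x, u x ^ p ∂ν :=
  lintegral_mono fun _ => ENNReal.rpow_le_rpow ENNReal.ofReal_toReal_le hp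

lemma ent_int {n : ℕ} (S : NSystem n) {u : Euc n → ℝ≥0∞} (hu : LowerSemicontinuousOn u S.P)
    {p : ℝ} (hp : 1 < p) (hW : ∫⁻ x in S.P, u x ^ p ∂S.μ ≠ ⊤) :
    Integrable (fun x => xlogx (u x)) (S.μ.restrict S.P) := by
  have := sys_fin S
  obtain ⟨C, hC, h⟩ := abs_xlogx_le hp 1 one_pos
  exact int_phi (g := fun x => (u x).toReal) (φ := fun y => y * Real.log y) (sys_aem S hu _).ennreal_toReal (fun _ => ENNReal.toReal_nonneg) hp
    (ne_top_of_le_ne_top hW (pow_le' _ u (by linarith))) Real.continuous_mul_log hC h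

lemma ent_bds {n : ℕ} (S : NSystem n) {u : Euc n → ℝ≥0∞} (hu : u ∈ MExp S 1)
    {p : ℝ} (hp : 1 < p) (hW : ∫⁻ x in S.P, u x ^ p ∂S.μ ≠ ⊤) :
    0 ≤ enE S u ∧ ∀ s > 0, (p - 1) * enE S u ≤ s * (∫⁻ x in S.P, u x ^ p ∂S.μ).toReal
      - (S.μ S.P).toReal - (S.μ S.P).toReal * Real.log s := by
  have := sys_fin S
  obtain ⟨hl, hpos, hlc, hI, -⟩ := hu
  have hi := ent_int S hl hp hW
  have ham := sys_aem S hl S.μ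
  have hIt : ∫⁻ x in S.P, u x ∂S.μ ≠ ⊤ := by rw [hI]; exact sys_mu_ne_top S
  have hg : Integrable (fun x => (u x).toReal) (S.μ.restrict S.P) := integrable_toReal_of_lintegral_ne_top ham hIt
  have hgp : Integrable (fun x => (u x).toReal ^ p) (S.μ.restrict S.P) := by
    simpa [ENNReal.toReal_rpow] using integrable_toReal_of_lintegral_ne_top (ham.pow_const p) hW
  have hgi : ∫ x in S.P, (u x).toReal ∂S.μ = (S.μ S.P).toReal := by
    rw [integral_toReal ham (ae_lt_top' ham hIt), hI]
  have hgpi : ∫ x in S.P, (u x).toReal ^ p ∂S.μ = (∫⁻ x in S.P, u x ^ p ∂S.μ).toReal := by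
    rw [← integral_toReal (ham.pow_const p) (ae_lt_top' (ham.pow_const p) hW)]
    simp [ENNReal.toReal_rpow]
  have hone : ∫ x in S.P, (1:ℝ) ∂S.μ = (S.μ S.P).toReal := by simp [Measure.real]
  constructor
  · have : ∫ x in S.P, ((u x).toReal - 1) ∂S.μ ≤ enE S u := by
      refine integral_mono (hg.sub (integrable_const _)) hi fun x => ?_
      simp only [xlogx]
      rcases (ENNReal.toReal_nonneg (a := u x)).eq_or_lt with h | hy0
      · rw [← h]; norm_num
      · have := Real.one_sub_inv_le_log_of_pos hy0
        calc (u x).toReal - 1 = (u x).toReal * (1 - (u x).toReal⁻¹) := by field_simp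
          _ ≤ _ := by gcongr
    rw [integral_sub hg (integrable_const _), hgi, hone] at this
    linarith
  · intro s hs
    have : ∫ x in S.P, (p - 1) * xlogx (u x) ∂S.μ ≤
        ∫ x in S.P, (s * (u x).toReal ^ p - (u x).toReal - (u x).toReal * Real.log s) ∂S.μ := by
      refine integral_mono (hi.const_mul _) (((hgp.const_mul _).sub hg).sub (hg.mul_const _)) fun x => ?_
      simp only [xlogx]
      rcases (ENNReal.toReal_nonneg (a := u x)).eq_or_lt with h | hy0
      · rw [← h, Real.zero_rpow (by linarith)]; norm_num
      · set y := (u x).toReal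
        have h1 := Real.log_le_sub_one_of_pos (show 0 < s * y ^ (p-1) by positivity)
        rw [Real.log_mul hs.ne' (by positivity), Real.log_rpow hy0] at h1
        have h2 := mul_le_mul_of_nonneg_left h1 hy0.le
        have h3 : y * y ^ (p-1) = y ^ p := by
          rw [mul_comm, ← Real.rpow_add_one hy0.ne']; simp
        nlinarith
    have hs2 : Integrable (fun x => s * (u x).toReal ^ p - (u x).toReal) (S.μ.restrict S.P) :=
      (hgp.const_mul _).sub hg
    rw [integral_const_mul, integral_sub hs2 (hg.mul_const _),
      integral_sub (hgp.const_mul _) hg, integral_const_mul, integral_mul_const, hgi, hgpi] at this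
    exact this

lemma coercive {n : ℕ} (S : NSystem n) {p : ℝ} (hp : 1 < p) {C : ℝ≥0∞} (hC : C ≠ ⊤) {η : ℝ} (hη : 0 < η) :
    ∃ K : ℝ, ∀ u ∈ MExp S 1, bE S u ≠ ⊤ → ∫⁻ x in S.P, u x ^ p ∂S.μ ≤ C * bE S u ^ p →
      enE S u ≤ η * (bE S u).toReal + K := by
  set V := (S.μ S.P).toReal with hV
  have hV0 : 0 ≤ V := ENNReal.toReal_nonneg
  have hp1 : 0 < p - 1 := by linarith
  set η' := η * (p - 1) / (p * (V + 1)) with hη'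
  have h0 : 0 < η' := by positivity
  refine ⟨(C.toReal + V * p * (η' - 1 - Real.log η')) / (p - 1), fun u hu hb hW => ?_⟩
  have hCt : C * bE S u ^ p ≠ ⊤ := ENNReal.mul_ne_top hC (ENNReal.rpow_ne_top_of_nonneg (by linarith) hb)
  have hWt := ne_top_of_le_ne_top hCt hW
  set b := (bE S u).toReal with hbdef
  have hb0 : 0 ≤ b := ENNReal.toReal_nonneg
  have h1 := (ent_bds S hu hp hWt).2 ((b + 1) ^ (-p)) (by positivity)
  have hW' : (∫⁻ x in S.P, u x ^ p ∂S.μ).toReal ≤ C.toReal * b ^ p := by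
    have := ENNReal.toReal_mono hCt hW
    rwa [ENNReal.toReal_mul, ← ENNReal.toReal_rpow] at this
  have h2 : (b + 1) ^ (-p) * (∫⁻ x in S.P, u x ^ p ∂S.μ).toReal ≤ C.toReal := by
    calc _ ≤ (b + 1) ^ (-p) * (C.toReal * (b + 1) ^ p) := by
          gcongr
          refine hW'.trans ?_
          gcongr
          linarith
      _ = C.toReal := by
          rw [Real.rpow_neg (by positivity)]
          have : 0 < (b+1) ^ p := by positivity
          field_simp
  have h3 : Real.log (b + 1) ≤ η' * (b + 1) - 1 - Real.log η' := by
    have := Real.log_le_sub_one_of_pos (show 0 < η' * (b + 1) by positivity)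
    rw [Real.log_mul h0.ne' (by positivity)] at this
    linarith
  rw [Real.log_rpow (by positivity)] at h1
  have h4 : V * (p * Real.log (b + 1)) ≤ V * (p * (η' * (b + 1) - 1 - Real.log η')) := by gcongr
  have h5 : V * (p * η') ≤ η * (p - 1) := by
    rw [hη', ← mul_assoc, ← mul_div_assoc, div_le_iff₀ (by positivity)]
    have : 0 ≤ η * (p-1) * p := by positivity
    nlinarith
  have h6 : V * (p * η') * b ≤ η * (p - 1) * b := by gcongr
  have h7 : enE S u * (p - 1) ≤ (η * b) * (p - 1) + (C.toReal + V * p * (η' - 1 - Real.log η')) := by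
    nlinarith
  have h8 : enE S u ≤ ((η * b) * (p - 1) + (C.toReal + V * p * (η' - 1 - Real.log η'))) / (p - 1) := by
    rwa [le_div_iff₀ hp1]
  rw [add_div, mul_div_cancel_right₀ _ hp1.ne'] at h8
  exact h8

lemma Spf_eq {n : ℕ} (S : NSystem n) {u : Euc n → ℝ≥0∞}
    (hi : Integrable (fun x => xlogx (u x)) (S.μ.restrict S.P)) :
    Spf S u = ((-((S.μ S.P).toReal⁻¹ * enE S u) : ℝ) : EReal) := by
  have h1 : ∫⁻ x in S.P, ENNReal.ofReal (xlogx (u x)) ∂S.μ ≠ ⊤ := hi.lintegral_lt_top.ne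
  have h2 : ∫⁻ x in S.P, ENNReal.ofReal (-(xlogx (u x))) ∂S.μ ≠ ⊤ := hi.neg.lintegral_lt_top.ne
  have h3 := integral_eq_lintegral_pos_part_sub_lintegral_neg_part hi
  unfold Spf enE
  rw [h3]
  rw [← EReal.coe_ennreal_toReal h1, ← EReal.coe_ennreal_toReal h2, ← EReal.coe_sub, ← EReal.coe_mul]
  congr 1; ring

lemma Fpf_eq {n : ℕ} (S : NSystem n) (T : ℝ) {u : Euc n → ℝ≥0∞}
    (hi : Integrable (fun x => xlogx (u x)) (S.μ.restrict S.P)) (hb : bE S u ≠ ⊤) :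
    Fpf S T u = (((S.μ S.P).toReal⁻¹ * ((bE S u).toReal + T * enE S u) : ℝ) : EReal) := by
  have hU : Upf S u ≠ ⊤ := ENNReal.mul_ne_top (ENNReal.inv_ne_top.2 (sys_mu_ne_zero S)) hb
  unfold Fpf
  rw [Spf_eq S hi, if_neg (EReal.coe_ne_bot _), ← EReal.coe_ennreal_toReal hU, ← EReal.coe_mul, ← EReal.coe_sub]
  congr 1
  rw [Upf, ENNReal.toReal_mul, ENNReal.toReal_inv, bE]
  ring

lemma Fpf_top {n : ℕ} (S : NSystem n) (T : ℝ) {u : Euc n → ℝ≥0∞} (hb : bE S u = ⊤) :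
    Fpf S T u = ⊤ := by
  have hU : Upf S u = ⊤ := by
    unfold Upf; unfold bE at hb; rw [hb, ENNReal.mul_top (ENNReal.inv_ne_zero.2 (sys_mu_ne_top S))]
  unfold Fpf
  split_ifs with h
  · rfl
  have h2 : ∫⁻ x in S.P, ENNReal.ofReal (-(xlogx (u x))) ∂S.μ ≠ ⊤ := by
    refine ne_top_of_le_ne_top (sys_mu_ne_top S) ?_
    calc _ ≤ ∫⁻ x in S.P, 1 ∂S.μ := by
          refine lintegral_mono fun x => ?_
          rw [ENNReal.ofReal_le_one]
          simp only [xlogx]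
          rcases (ENNReal.toReal_nonneg (a := u x)).eq_or_lt with h | hy0
          · rw [← h]; norm_num
          · have := Real.one_sub_inv_le_log_of_pos hy0
            have : (u x).toReal - 1 ≤ (u x).toReal * Real.log (u x).toReal := by
              calc (u x).toReal - 1 = (u x).toReal * (1 - (u x).toReal⁻¹) := by field_simp
                _ ≤ _ := by gcongr
            linarith
      _ = S.μ S.P := by simp
  have hV : 0 < (S.μ S.P).toReal⁻¹ := inv_pos.2 (ENNReal.toReal_pos (sys_mu_ne_zero S) (sys_mu_ne_top S))
  have h1 : ∫⁻ x in S.P, ENNReal.ofReal (xlogx (u x)) ∂S.μ ≠ ⊤ := by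
    intro h1
    apply h
    unfold Spf
    rw [h1, ← EReal.coe_ennreal_toReal h2, EReal.coe_ennreal_top, EReal.sub_top, EReal.coe_mul_bot_of_pos hV]
  unfold Spf
  rw [← EReal.coe_ennreal_toReal h1, ← EReal.coe_ennreal_toReal h2, ← EReal.coe_sub, ← EReal.coe_mul, ← EReal.coe_mul,
    hU, EReal.coe_ennreal_top, EReal.top_sub_coe]


lemma one_memM {n : ℕ} (S : NSystem n) (p : ℝ) : (fun _ => 1) ∈ MExp S p := by
  refine ⟨fun x _ => continuousWithinAt_const.lowerSemicontinuousWithinAt, fun _ _ => one_pos, ?_, ?_, ?_⟩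
  · intro x _ y _ t _ _; simp
  · simp
  · simpa using (sys_mu_ne_top S).lt_top

lemma fatou_pow {n : ℕ} {ν : Measure (Euc n)} {v : ℕ → Euc n → ℝ≥0∞} {u : Euc n → ℝ≥0∞}
    (hv : ∀ k, Measurable (v k)) (hlim : ∀ᵐ x ∂ν, Tendsto (fun k => v k x) atTop (𝓝 (u x)))
    {q : ℝ} {M : ℝ≥0∞} (hM : ∀ k, ∫⁻ x, v k x ^ q ∂ν ≤ M) : ∫⁻ x, u x ^ q ∂ν ≤ M := by
  calc ∫⁻ x, u x ^ q ∂ν = ∫⁻ x, liminf (fun k => v k x ^ q) atTop ∂ν := by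
        refine lintegral_congr_ae ?_
        filter_upwards [hlim] with x hx
        exact (((ENNReal.continuous_rpow_const (y := q)).tendsto _).comp hx).liminf_eq.symm
    _ ≤ liminf (fun k => ∫⁻ x, v k x ^ q ∂ν) atTop := lintegral_liminf_le fun k => (hv k).pow_const q
    _ ≤ M := liminf_le_of_frequently_le' (Eventually.of_forall hM).frequently

lemma setL_ind {n : ℕ} {P A : Set (Euc n)} (hA : MeasurableSet A) (hAP : A ⊆ P) (ν : Measure (Euc n))
    (w : Euc n → ℝ≥0∞) (q : ℝ) : ∫⁻ x in A, P.indicator w x ^ q ∂ν = ∫⁻ x in A, w x ^ q ∂ν :=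
  setLIntegral_congr_fun hA fun x hx => by simp [Set.indicator_of_mem (hAP hx)]

lemma limit_exists {m : ℕ} (S : NSystem (m + 1)) {p : ℝ} (hp : 1 < p) {M : ℝ≥0∞} (hM : M ≠ ⊤)
    (w : ℕ → Euc (m + 1) → ℝ≥0∞) (hw : ∀ k, w k ∈ MExp S 1)
    (hW : ∀ k, ∫⁻ x in S.P, w k x ^ p ∂S.μ ≤ M) :
    ∃ φ : ℕ → ℕ, StrictMono φ ∧ ∃ u ∈ MExp S 1, ∫⁻ x in S.P, u x ^ p ∂S.μ ≤ M ∧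
      Tendsto (fun k => enE S (w (φ k))) atTop (𝓝 (enE S u)) ∧
      bE S u ≤ liminf (fun k => bE S (w (φ k))) atTop := by
  have := sys_fin S
  have hPm := (sys_compact S).measurableSet
  have hPc := (sys_compact S).isClosed
  obtain ⟨c, hc, hμ, -⟩ := sys_mu S
  set v : ℕ → Euc (m + 1) → ℝ≥0∞ := fun k => S.P.indicator (w k) with hv
  have hvm : ∀ k, Measurable (v k) := fun k => ind_meas hPc (hw k).1
  have hvlc : ∀ k, LogConvexOn S.P (v k) := fun k => lc_ind (sys_conv S) (hw k).2.2.1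
  have hv1 : ∀ k, ∫⁻ x in S.P, v k x = volume S.P := by
    intro k
    have := sys_int_vol S (hw k).2.2.2.1
    rw [← this]
    simpa using setL_ind hPm subset_rfl volume (w k) 1
  have hvp : ∀ k, ∫⁻ x in S.P, v k x ^ p ≤ (ENNReal.ofReal c)⁻¹ * M := by
    intro k
    have h := hW k
    rw [← setL_ind hPm subset_rfl, hμ, lintegral_smul_measure, smul_eq_mul] at h
    have hc0 : ENNReal.ofReal c ≠ 0 := by simpa using hc
    calc _ = (ENNReal.ofReal c)⁻¹ * (ENNReal.ofReal c * ∫⁻ x in S.P, v k x ^ p) := by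
          rw [← mul_assoc, ENNReal.inv_mul_cancel hc0 ENNReal.ofReal_ne_top, one_mul]
      _ ≤ _ := by gcongr
  have hM' : (ENNReal.ofReal c)⁻¹ * M ≠ ⊤ := ENNReal.mul_ne_top (ENNReal.inv_ne_top.2 (by simpa using hc)) hM
  obtain ⟨a, ha, hat, hlow⟩ := lower_bd (sys_compact S) (sys_conv S) (sys_vol_ne_zero S) hp hM'
  have hup : ∀ x ∈ interior S.P, ∃ r > 0, ∃ C : ℝ≥0∞, C ≠ ⊤ ∧ Metric.ball x r ⊆ interior S.P ∧
      ∀ k, ∀ y ∈ Metric.ball x r, v k y ≤ C := by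
    intro x hx
    obtain ⟨ε, hε, hsub⟩ := Metric.isOpen_iff.1 isOpen_interior x hx
    obtain ⟨C, hC, h⟩ := inner_bd (x := x) (half_pos hε) hPm (sys_vol_ne_top S)
      (by rw [mul_div_cancel₀ ε two_ne_zero]; exact hsub.trans interior_subset)
    exact ⟨ε / 2, half_pos hε, C, hC, (Metric.ball_subset_ball (by linarith)).trans hsub,
      fun k y hy => h (v k) (hvm k) (hvlc k) (hv1 k) y hy⟩
  obtain ⟨φ, hφ, u, hul, hu0, hulc, huint, hulim⟩ := compactness (sys_conv S) (sys_int S) v hvlc hup ha hat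
    (fun k x hx => hlow (v k) (hvm k) (hvlc k) (hv1 k) (hvp k) x hx)
  have hae : ∀ᵐ x ∂(S.μ.restrict S.P), u x ≠ ⊤ ∧ Tendsto (fun k => v (φ k) x) atTop (𝓝 (u x)) := by
    filter_upwards [sys_ae_int S] with x hx using huint x hx
  have hWv : ∀ k, ∫⁻ x in S.P, v k x ^ p ∂S.μ ≤ M := fun k => by
    rw [hv, setL_ind hPm subset_rfl]; exact hW k
  have hv1' : ∀ k, ∫⁻ x in S.P, v k x ∂S.μ = S.μ S.P := fun k => by
    rw [← (hw k).2.2.2.1]; simpa using setL_ind hPm subset_rfl S.μ (w k) 1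
  have huW : ∫⁻ x in S.P, u x ^ p ∂S.μ ≤ M :=
    fatou_pow (fun k => hvm (φ k)) (hae.mono fun x h => h.2) fun k => hWv _
  have hu1 : ∫⁻ x in S.P, u x ∂S.μ ≤ S.μ S.P := by
    simpa using fatou_pow (q := 1) (fun k => hvm (φ k)) (hae.mono fun x h => h.2) fun k => by
      simpa using (hv1' (φ k)).le
  have hu1t := ne_top_of_le_ne_top (sys_mu_ne_top S) hu1
  have hua := sys_aem S hul S.μ
  have hlimR : ∀ᵐ x ∂(S.μ.restrict S.P), Tendsto (fun k => (v (φ k) x).toReal) atTop (𝓝 (u x).toReal) := by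
    filter_upwards [hae] with x hx using (ENNReal.tendsto_toReal hx.1).comp hx.2
  have hconv := fun (ψ : ℝ → ℝ) (hc : Continuous ψ) hψ =>
    conv_int (m := S.μ.restrict S.P) (g := fun k x => (v (φ k) x).toReal) (g0 := fun x => (u x).toReal)
      (fun k => (hvm (φ k)).ennreal_toReal.aemeasurable) (fun _ _ => ENNReal.toReal_nonneg) hua.ennreal_toReal
      (fun _ => ENNReal.toReal_nonneg) hlimR hp hM
      (fun k => (pow_le' _ _ (by linarith)).trans (hWv (φ k))) ((pow_le' _ _ (by linarith)).trans huW) (φ := ψ) hc hψ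
  have hI : ∫⁻ x in S.P, u x ∂S.μ = S.μ S.P := by
    have h1 := hconv (fun y => y) continuous_id (abs_id_le hp)
    have h2 : ∀ k, ∫ x in S.P, (v (φ k) x).toReal ∂S.μ = (S.μ S.P).toReal := fun k => by
      rw [integral_toReal (hvm _).aemeasurable
        (ae_lt_top' (hvm _).aemeasurable (by rw [hv1']; exact sys_mu_ne_top S)), hv1']
    simp only [h2] at h1
    have h3 := tendsto_nhds_unique h1 tendsto_const_nhds
    rw [integral_toReal hua (ae_lt_top' hua hu1t)] at h3
    exact (ENNReal.toReal_eq_toReal_iff' hu1t (sys_mu_ne_top S)).1 h3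
  refine ⟨φ, hφ, u, ⟨hul, hu0, hulc, hI, by simpa using hu1t.lt_top⟩, huW, ?_, ?_⟩
  · have h1 := hconv (fun y => y * Real.log y) Real.continuous_mul_log (abs_xlogx_le hp)
    refine h1.congr fun k => ?_
    exact setIntegral_congr_fun hPm fun x hx => by simp [hv, xlogx, Set.indicator_of_mem hx]
  · have hfP : frontier S.P ⊆ S.P := hPc.frontier_subset
    have hfm : MeasurableSet (frontier S.P) := isClosed_frontier.measurableSet
    calc bE S u ≤ ∫⁻ x in frontier S.P, liminf (fun k => v (φ k) x) atTop ∂S.σ :=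
          setLIntegral_mono' hfm fun x hx => hulim x (hfP hx)
      _ ≤ liminf (fun k => ∫⁻ x in frontier S.P, v (φ k) x ∂S.σ) atTop :=
          lintegral_liminf_le fun k => hvm _
      _ = _ := by
          congr 1; funext k
          simpa [bE] using setL_ind hfm hfP S.σ (w (φ k)) 1

lemma main_succ {m : ℕ} (S : NSystem (m + 1)) (T : ℝ) :
    ∃ u ∈ MExp S (((m + 1 : ℕ) : ℝ) / (((m + 1 : ℕ) : ℝ) - 1)),
      ∀ u' ∈ MExp S 1, Fpf S T u ≤ Fpf S T u' := by
  obtain ⟨p, hp, hpn, C, hC, hmain⟩ := main_ineq S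
  have hWC : ∀ u ∈ MExp S 1, ∫⁻ x in S.P, u x ^ p ∂S.μ ≤ C * bE S u ^ p := fun u hu => hmain u hu.1 hu.2.2.1
  have hWt : ∀ u ∈ MExp S 1, bE S u ≠ ⊤ → ∫⁻ x in S.P, u x ^ p ∂S.μ ≠ ⊤ := fun u hu hb =>
    ne_top_of_le_ne_top (ENNReal.mul_ne_top hC (ENNReal.rpow_ne_top_of_nonneg (by linarith) hb)) (hWC u hu)
  set D : Set (Euc (m + 1) → ℝ≥0∞) := {u | u ∈ MExp S 1 ∧ bE S u ≠ ⊤} with hD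
  rcases D.eq_empty_or_nonempty with hDe | hDn
  · refine ⟨fun _ => 1, one_memM S _, fun u' hu' => ?_⟩
    rw [Fpf_top S T (u := u')]
    · exact le_top
    · by_contra h
      have : u' ∈ D := ⟨hu', h⟩
      simp [hDe] at this
  set J : (Euc (m + 1) → ℝ≥0∞) → ℝ := fun u => (bE S u).toReal + T * enE S u with hJ
  obtain ⟨K, hK⟩ := coercive S hp hC (η := 1 / (2 * (|T| + 1))) (by positivity)
  have hlow : ∀ u ∈ D, (bE S u).toReal / 2 ≤ J u + |T| * K := by
    intro u hu
    have h1 := hK u hu.1 hu.2 (hWC u hu.1)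
    have h2 := (ent_bds S hu.1 hp (hWt u hu.1 hu.2)).1
    have hb0 : 0 ≤ (bE S u).toReal := ENNReal.toReal_nonneg
    have h3 : -(|T| * enE S u) ≤ T * enE S u := by nlinarith [neg_abs_le T]
    have h4 : |T| * enE S u ≤ |T| * (1 / (2 * (|T| + 1)) * (bE S u).toReal + K) := by gcongr
    have h5 : |T| * (1 / (2 * (|T| + 1)) ) ≤ 1 / 2 := by
      rw [mul_one_div, div_le_div_iff₀ (by positivity) (by positivity)]; nlinarith [abs_nonneg T]
    have h6 : |T| * (1 / (2 * (|T| + 1)) ) * (bE S u).toReal ≤ 1 / 2 * (bE S u).toReal := by gcongr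
    simp only [hJ]
    nlinarith
  have hbb : BddBelow (J '' D) := by
    refine ⟨-(|T| * K), ?_⟩
    rintro _ ⟨u, hu, rfl⟩
    have := hlow u hu
    have hb0 : 0 ≤ (bE S u).toReal := ENNReal.toReal_nonneg
    linarith
  obtain ⟨y, -, hy, hymem⟩ := exists_seq_tendsto_sInf (hDn.image J) hbb
  choose w hwD hwJ using hymem
  obtain ⟨B, hB⟩ := hy.bddAbove_range
  have hbd : ∀ k, bE S (w k) ≤ ENNReal.ofReal (2 * (B + |T| * K)) := by
    intro k
    rw [← ENNReal.ofReal_toReal (hwD k).2]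
    apply ENNReal.ofReal_le_ofReal
    have := hlow _ (hwD k)
    rw [hwJ] at this
    have := hB (Set.mem_range_self k)
    linarith
  have hMt : C * ENNReal.ofReal (2 * (B + |T| * K)) ^ p ≠ ⊤ :=
    ENNReal.mul_ne_top hC (ENNReal.rpow_ne_top_of_nonneg (by linarith) ENNReal.ofReal_ne_top)
  obtain ⟨φ, hφ, u, hu, huW, hE, hb⟩ := limit_exists S hp hMt w (fun k => (hwD k).1) fun k =>
    (hWC _ (hwD k).1).trans (by gcongr; exact hbd k)
  have hlim : Tendsto (fun k => y (φ k) - T * enE S (w (φ k))) atTop (𝓝 (sInf (J '' D) - T * enE S u)) :=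
    (hy.comp hφ.tendsto_atTop).sub (hE.const_mul T)
  have hbk : ∀ k, (bE S (w (φ k))).toReal = y (φ k) - T * enE S (w (φ k)) := fun k => by
    rw [← hwJ]; simp [hJ]
  simp only [← hbk] at hlim
  have hl0 : 0 ≤ sInf (J '' D) - T * enE S u := ge_of_tendsto' hlim fun k => ENNReal.toReal_nonneg
  have hlim2 : Tendsto (fun k => bE S (w (φ k))) atTop (𝓝 (ENNReal.ofReal (sInf (J '' D) - T * enE S u))) :=
    (ENNReal.tendsto_ofReal hlim).congr fun k => ENNReal.ofReal_toReal (hwD _).2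
  rw [hlim2.liminf_eq] at hb
  have hbt := ne_top_of_le_ne_top ENNReal.ofReal_ne_top hb
  have huJ : J u ≤ sInf (J '' D) := by
    have := ENNReal.toReal_mono ENNReal.ofReal_ne_top hb
    rw [ENNReal.toReal_ofReal hl0] at this
    simp only [hJ] at this ⊢
    linarith
  refine ⟨u, ⟨hu.1, hu.2.1, hu.2.2.1, hu.2.2.2.1, ?_⟩, ?_⟩
  · rcases Nat.eq_zero_or_pos m with h0 | h0
    · subst h0
      simpa using (sys_mu_ne_top S).lt_top
    · rw [← hpn h0]; exact huW.trans_lt hMt.lt_top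
  · intro u' hu'
    by_cases hb' : bE S u' = ⊤
    · rw [Fpf_top S T hb']; exact le_top
    rw [Fpf_eq S T (ent_int S hu.1 hp (hWt u hu hbt)) hbt, Fpf_eq S T (ent_int S hu'.1 hp (hWt u' hu' hb')) hb',
      EReal.coe_le_coe_iff]
    have : J u ≤ J u' := huJ.trans (csInf_le hbb ⟨u', ⟨hu', hb'⟩, rfl⟩)
    have h0 : 0 ≤ (S.μ S.P).toReal⁻¹ := by positivity
    exact mul_le_mul_of_nonneg_left this h0

lemma main_zero (S : NSystem 0) (T : ℝ) (p : ℝ) :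
    ∃ u ∈ MExp S p, ∀ u' ∈ MExp S 1, Fpf S T u ≤ Fpf S T u' := by
  refine ⟨fun _ => 1, one_memM S _, fun u' hu' => ?_⟩
  have huniv : S.P = Set.univ := by
    obtain ⟨x, hx⟩ := (sys_int S)
    exact Set.eq_univ_of_forall fun y => by rw [Subsingleton.elim y x]; exact interior_subset hx
  have h1 := hu'.2.2.2.1
  have hc : u' = fun _ => u' 0 := by funext x; rw [Subsingleton.elim x 0]
  rw [hc] at h1
  rw [setLIntegral_const] at h1
  have : u' 0 = 1 := by
    have h2 : u' 0 * S.μ S.P = 1 * S.μ S.P := by rw [h1, one_mul]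
    exact (ENNReal.mul_left_inj (sys_mu_ne_zero S) (sys_mu_ne_top S)).1 h2
  rw [hc, this]

/-- Existence of minimizers: for every temperature `T ∈ ℝ` there is
`u ∈ ℳ^{exp, n/(n−1)}(P)` minimizing the free μ-energy `F_𝒫(T,·)` on
`ℳ^{exp,1}(P)`. -/
theorem exists_free_energy_minimizer (n : ℕ) (S : NSystem n) (T : ℝ) :
    ∃ u ∈ MExp S ((n : ℝ) / ((n : ℝ) - 1)),
      ∀ u' ∈ MExp S 1, Fpf S T u ≤ Fpf S T u' := by
  cases n with
  | zero => exact main_zero S T _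
  | succ m => exact main_succ S T

end
end
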